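/- arXiv:2012.10811 — 2 statements merged into one kernel-verified Lean document; each statement's English description precedes it below -/
import Mathlib

section
/- Let q ∈ (1/3, 1]. Then, for the single-walker H–V walk with parameter q, p_rec(ρ) = 1 for almost every label configuration ρ sampled from the IUD measure; that is, with the initial labels drawn independently and uniformly from {H,V}, the single-walker H–V walk is recurrent almost surely. -/
/-! The proof uses a supermartingale for the pair (position, labels). Let
`pot x = log (|x|² - 1/2)` be the regularised logarithmic potential, which is superharmonic for the
simple random walk away from the origin (`pot_super`), and let `dpot x` be a quarter of the
difference between the sums of `pot` over the two horizontal and over the two vertical neighbours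
of `x`. The walk at `x` does not choose between horizontal and vertical steps fairly, but the
resulting drift of `pot` is a multiple of `sg (ρ x) * dpot x`, and so is the change of the field
`fld R ρ = ∑ sg (ρ y) * dpot y` (sum over the punctured square `box R`) under the relabelling of
`x`. Hence `spm = pot + cc q * fld R`, with `cc q = (1 - 2q) / (2q)`, is a supermartingale until the
walk hits the origin or leaves `box R` (`spm_super`).

Stop it at that time and average over the initial labels.

* From above: on the event that the walk returns to the origin, the field has changed only at
  visited sites, and to visit a site of norm `k` the walk has to reach distance `k`, with
  probability `p k` say. The total mass of `|dpot|` on the sphere of radius `k` is at most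
  `4 / k + O(k⁻²)` (`dl_le`), and the initial field is of size `o(log R)` in mean because the labels
  are independent and centred (`IsIUD.integral_abs_fld`). So the expectation at the exit is at most
  `o(log R) + O(1) * ∑_{k < R} (p k - p R) / k` (`integral_xp_le`).
* From below: on the event that the walk reaches distance `R`, the potential is at least
  `2 log R - 1`, while `|fld R| ≤ 4 log R + O(1)`. If `1/3 < q < 1`, then `|cc q| < 1/2` and
  the supermartingale is at least `ε log R` there. If `q = 1`, then `cc q = -1/2` and the two terms
  may cancel, but only if nearly all labels take their extremal values. In each `2 × 2` square of a
  cone where the extremal value is vertical, a walk which has just left four vertical labels there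
  could instead, with probability bounded below, have made a detour of six steps leaving a
  horizontal label (`loop`, `psi_le`), and a square which is never visited has a horizontal label
  with probability at least one half; so a horizontal label is present at the exit with
  probability at least `p R / 65` (`aep_le`), and summing over the squares gives `ε log R * p R`
  again (`integral_xp_ge`).

As `p` is nonincreasing it converges, and the weighted Cesàro mean of `p k - p R` vanishes; comparing
both bounds, `p R → 0` (`esc_tendsto`). Since `box R` is left in finite time (`ev_inb_le`), the
walk hits the origin almost surely for almost every `ρ`, from any starting point. The IUD measure
is invariant under translations and finite modifications of the labels, so almost surely this
holds for every target vertex and from every state the walk can reach (`ae_sv_lt_all`), and every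
vertex is visited infinitely often (`measure_recurrent`). -/

open MeasureTheory Filter
open scoped ENNReal

namespace HV

abbrev Z2 := ℤ × ℤ

/-- A label configuration: `true` stands for label `H`, `false` for label `V`. -/
abbrev Config := Z2 → Bool

/-- The state of the walk: positions of the `n` walkers and the label configuration. -/
abbrev State (n : ℕ) := (Fin n → Z2) × Config

/-- A trajectory: the sequence of positions of the active walker after each step. -/
abbrev Path := ℕ → Z2

/-- The walker that is active at the `(t+1)`-st step of the cyclic turn order. -/
def active (n : ℕ) (hn : 0 < n) (t : ℕ) : Fin n := ⟨t % n, Nat.mod_lt t hn⟩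

/-- Update the state when walker `i` moves to `y`: the label of the vertex the walker
leaves becomes `H` (`true`) if the move was horizontal, `V` (`false`) if vertical. -/
def apply' (n : ℕ) (s : State n) (i : Fin n) (y : Z2) : State n :=
  (Function.update s.1 i y,
    Function.update s.2 (s.1 i) (if y.2 = (s.1 i).2 then true else false))

/-- The one-step transition probability of the `H`–`V` walk with parameter `q`:
probability that, from state `s`, the active walker `i` moves to `y`.  The label of the
current location is first resampled (flipped with probability `q`), and then the walker
takes a uniform horizontal step if the new label is `H`, a uniform vertical step if the
new label is `V`. -/
noncomputable def weight (q : ℝ) (n : ℕ) (s : State n) (i : Fin n) (y : Z2) : ℝ≥0∞ :=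
  if y = s.1 i + (1, 0) ∨ y = s.1 i - (1, 0) then
    ENNReal.ofReal ((if s.2 (s.1 i) then 1 - q else q) / 2)
  else if y = s.1 i + (0, 1) ∨ y = s.1 i - (0, 1) then
    ENNReal.ofReal ((if s.2 (s.1 i) then q else 1 - q) / 2)
  else 0

/-- The deterministic reconstruction of the state of the `n`-walker `H`–`V` walk
(with all walkers starting at the origin and initial labels `ρ`) from a trajectory. -/
def seq (n : ℕ) (hn : 0 < n) (ρ : Config) (y : Path) : ℕ → State n
  | 0 => (fun _ => (0, 0), ρ)
  | t + 1 => apply' n (seq n hn ρ y t) (active n hn t) (y t)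

/-- `μ` is the law of the `n`-walker `H`–`V` walk with parameter `q` and initial labels `ρ`:
the finite-dimensional distributions are products of one-step transition probabilities. -/
def IsLaw (q : ℝ) (n : ℕ) (hn : 0 < n) (ρ : Config) (μ : Measure Path) : Prop :=
  ∀ (t : ℕ) (c : Path),
    μ {y : Path | ∀ s < t, y s = c s} =
      ∏ s ∈ Finset.range t, weight q n (seq n hn ρ c s) (active n hn s) (c s)

/-- A trajectory is recurrent if every vertex is visited infinitely many times. -/
def Recurrent (n : ℕ) (hn : 0 < n) (ρ : Config) (y : Path) : Prop :=
  ∀ v : Z2, {t : ℕ | ∃ i, (seq n hn ρ y t).1 i = v}.Infinite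

end HV

namespace HV

/-- `ν` is the IUD measure on label configurations: the labels at distinct vertices are
independent and uniform on `{H, V}`, i.e. every finite cylinder event has probability
`(1/2)^(number of constrained vertices)`. -/
def IsIUD (ν : Measure Config) : Prop :=
  ∀ (F : Finset Z2) (g : Z2 → Bool),
    ν {ρ : Config | ∀ x ∈ F, ρ x = g x} = (2 : ℝ≥0∞)⁻¹ ^ F.card

end HV


namespace HV

/-- The unit step of type `b` (horizontal for `true`, vertical for `false`) and sign `σ`. -/
def dir (b σ : Bool) : Z2 :=
  if b then (if σ then (1, 0) else (-1, 0)) else (if σ then (0, 1) else (0, -1))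

/-- The probability that a label `b` is replaced by `b'`. -/
noncomputable def pr (q : ℝ) (b b' : Bool) : ℝ := if b = b' then 1 - q else q

/-- The one-step transition operator of the single-walker chain, acting on functions of the
position and the labels. -/
noncomputable def step (q : ℝ) (F : Z2 → Config → ℝ) (x : Z2) (ρ : Config) : ℝ :=
  ∑ b : Bool, ∑ σ : Bool, pr q (ρ x) b / 2 * F (x + dir b σ) (Function.update ρ x b)

open Classical in
/-- `ev q D F T x ρ` is the expectation of `F` at the state reached after `T` steps from
`(x, ρ)`, for the chain stopped when it leaves `D`. -/
noncomputable def ev (q : ℝ) (D : Set Z2) (F : Z2 → Config → ℝ) : ℕ → Z2 → Config → ℝ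
  | 0 => F
  | T + 1 => fun x ρ => if x ∈ D then step q (ev q D F T) x ρ else F x ρ

lemma pr_nonneg {q : ℝ} (h0 : 0 ≤ q) (h1 : q ≤ 1) (b b' : Bool) : 0 ≤ pr q b b' := by
  unfold pr; split_ifs <;> linarith

lemma step_eq (q : ℝ) (F : Z2 → Config → ℝ) (x : Z2) (ρ : Config) :
    step q F x ρ =
      pr q (ρ x) true / 2 * (F (x + (1, 0)) (Function.update ρ x true)
        + F (x + (-1, 0)) (Function.update ρ x true)) +
      pr q (ρ x) false / 2 * (F (x + (0, 1)) (Function.update ρ x false)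
        + F (x + (0, -1)) (Function.update ρ x false)) := by
  simp only [step, Fintype.sum_bool, dir, if_true, Bool.false_eq_true, if_false]
  ring

lemma step_mono {q : ℝ} (h0 : 0 ≤ q) (h1 : q ≤ 1) {F G : Z2 → Config → ℝ} {x : Z2} {ρ : Config}
    (h : ∀ b σ, F (x + dir b σ) (Function.update ρ x b)
      ≤ G (x + dir b σ) (Function.update ρ x b)) :
    step q F x ρ ≤ step q G x ρ := by
  unfold step
  refine Finset.sum_le_sum fun b _ => Finset.sum_le_sum fun σ _ => ?_
  exact mul_le_mul_of_nonneg_left (h b σ) (by have := pr_nonneg h0 h1 (ρ x) b; positivity)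

lemma step_const (q a : ℝ) (x : Z2) (ρ : Config) : step q (fun _ _ => a) x ρ = a := by
  rw [step_eq]; cases ρ x <;> simp [pr] <;> ring

lemma step_lin (q a b : ℝ) (F G : Z2 → Config → ℝ) (x : Z2) (ρ : Config) :
    step q (fun x ρ => a * F x ρ + b * G x ρ) x ρ = a * step q F x ρ + b * step q G x ρ := by
  simp only [step_eq]; ring

lemma step_nonneg {q : ℝ} (h0 : 0 ≤ q) (h1 : q ≤ 1) {F : Z2 → Config → ℝ} {x : Z2} {ρ : Config}
    (h : ∀ b σ, 0 ≤ F (x + dir b σ) (Function.update ρ x b)) :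
    0 ≤ step q F x ρ := by
  have := step_mono h0 h1 (F := fun _ _ => 0) (G := F) (x := x) (ρ := ρ) h
  rwa [step_const] at this

lemma ev_zero (q : ℝ) (D : Set Z2) (F : Z2 → Config → ℝ) : ev q D F 0 = F := rfl

lemma ev_succ_mem (q : ℝ) {D : Set Z2} (F : Z2 → Config → ℝ) (T : ℕ) {x : Z2} (hx : x ∈ D)
    (ρ : Config) : ev q D F (T + 1) x ρ = step q (ev q D F T) x ρ := by
  simp [ev, hx]

lemma ev_notMem (q : ℝ) {D : Set Z2} (F : Z2 → Config → ℝ) (T : ℕ) {x : Z2} (hx : x ∉ D)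
    (ρ : Config) : ev q D F T x ρ = F x ρ := by
  cases T <;> simp [ev, hx]

lemma ev_lin (q a b : ℝ) (D : Set Z2) (F G : Z2 → Config → ℝ) (T : ℕ) (x : Z2) (ρ : Config) :
    ev q D (fun x ρ => a * F x ρ + b * G x ρ) T x ρ
      = a * ev q D F T x ρ + b * ev q D G T x ρ := by
  induction T generalizing x ρ with
  | zero => rfl
  | succ T ih =>
    by_cases hx : x ∈ D
    · rw [ev_succ_mem _ _ _ hx, ev_succ_mem _ _ _ hx, ev_succ_mem _ _ _ hx, ← step_lin]
      congr 1; funext x ρ; exact ih x ρ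
    · simp [ev_notMem _ _ _ hx]

lemma ev_add (q : ℝ) (D : Set Z2) (F G : Z2 → Config → ℝ) (T : ℕ) (x : Z2) (ρ : Config) :
    ev q D (fun x ρ => F x ρ + G x ρ) T x ρ = ev q D F T x ρ + ev q D G T x ρ := by
  simpa using ev_lin q 1 1 D F G T x ρ

lemma ev_smul (q a : ℝ) (D : Set Z2) (F : Z2 → Config → ℝ) (T : ℕ) (x : Z2) (ρ : Config) :
    ev q D (fun x ρ => a * F x ρ) T x ρ = a * ev q D F T x ρ := by
  simpa using ev_lin q a 0 D F F T x ρ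

lemma ev_const (q a : ℝ) (D : Set Z2) (T : ℕ) (x : Z2) (ρ : Config) :
    ev q D (fun _ _ => a) T x ρ = a := by
  induction T generalizing x ρ with
  | zero => rfl
  | succ T ih =>
    by_cases hx : x ∈ D
    · rw [ev_succ_mem _ _ _ hx]
      exact (congrArg (fun F => step q F x ρ) (funext fun x => funext fun ρ => ih x ρ)).trans
        (step_const q a x ρ)
    · simp [ev_notMem _ _ _ hx]

lemma ev_sum {ι : Type*} (q : ℝ) (D : Set Z2) (s : Finset ι) (a : ι → ℝ)
    (F : ι → Z2 → Config → ℝ) (T : ℕ) (x : Z2) (ρ : Config) :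
    ev q D (fun x ρ => ∑ i ∈ s, a i * F i x ρ) T x ρ = ∑ i ∈ s, a i * ev q D (F i) T x ρ := by
  classical
  induction s using Finset.induction_on with
  | empty => simpa using ev_const q 0 D T x ρ
  | insert i s hi ih =>
    simp only [Finset.sum_insert hi]
    rw [ev_add, ih, ev_smul]

lemma ev_mono {q : ℝ} (h0 : 0 ≤ q) (h1 : q ≤ 1) {D : Set Z2} {F G : Z2 → Config → ℝ}
    (h : ∀ x ρ, F x ρ ≤ G x ρ) (T : ℕ) (x : Z2) (ρ : Config) :
    ev q D F T x ρ ≤ ev q D G T x ρ := by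
  induction T generalizing x ρ with
  | zero => exact h x ρ
  | succ T ih =>
    by_cases hx : x ∈ D
    · rw [ev_succ_mem _ _ _ hx, ev_succ_mem _ _ _ hx]
      exact step_mono h0 h1 fun b σ => ih _ _
    · simpa [ev_notMem _ _ _ hx] using h x ρ

lemma ev_nonneg {q : ℝ} (h0 : 0 ≤ q) (h1 : q ≤ 1) {D : Set Z2} {F : Z2 → Config → ℝ}
    (h : ∀ x ρ, 0 ≤ F x ρ) (T : ℕ) (x : Z2) (ρ : Config) : 0 ≤ ev q D F T x ρ := by
  simpa [ev_const] using ev_mono h0 h1 (F := fun _ _ => 0) (D := D) h T x ρ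

lemma ev_le_one {q : ℝ} (h0 : 0 ≤ q) (h1 : q ≤ 1) {D : Set Z2} {F : Z2 → Config → ℝ}
    (h : ∀ x ρ, F x ρ ≤ 1) (T : ℕ) (x : Z2) (ρ : Config) : ev q D F T x ρ ≤ 1 := by
  simpa [ev_const] using ev_mono h0 h1 (G := fun _ _ => 1) (D := D) h T x ρ

/-- A function that is superharmonic on `D` gives a supermartingale. -/
lemma ev_super {q : ℝ} (h0 : 0 ≤ q) (h1 : q ≤ 1) {D : Set Z2} {F : Z2 → Config → ℝ}
    (h : ∀ x ∈ D, ∀ ρ, step q F x ρ ≤ F x ρ) (T : ℕ) (x : Z2) (ρ : Config) :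
    ev q D F T x ρ ≤ F x ρ := by
  induction T generalizing x ρ with
  | zero => exact le_rfl
  | succ T ih =>
    by_cases hx : x ∈ D
    · rw [ev_succ_mem _ _ _ hx]
      exact (step_mono h0 h1 fun b σ => ih _ _).trans (h x hx ρ)
    · simp [ev_notMem _ _ _ hx]

lemma ev_monotone {q : ℝ} (h0 : 0 ≤ q) (h1 : q ≤ 1) {D : Set Z2} {F : Z2 → Config → ℝ}
    (h : ∀ x ∈ D, ∀ ρ, F x ρ ≤ step q F x ρ) (x : Z2) (ρ : Config) :
    Monotone fun T => ev q D F T x ρ := by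
  refine monotone_nat_of_le_succ fun T => ?_
  induction T generalizing x ρ with
  | zero =>
    by_cases hx : x ∈ D
    · rw [ev_succ_mem _ _ _ hx]; exact h x hx ρ
    · simp [ev_notMem _ _ _ hx]
  | succ T ih =>
    by_cases hx : x ∈ D
    · rw [ev_succ_mem _ _ _ hx, ev_succ_mem _ _ _ hx]
      exact step_mono h0 h1 fun b σ => ih _ _
    · simp [ev_notMem _ _ _ hx]

/-! ### Continuity in the labels -/

/-- `F` is continuous in the labels, hence integrable against any law of the labels. -/
def Nice (F : Z2 → Config → ℝ) : Prop := ∀ x, Continuous (F x)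

lemma continuous_label (g : Bool → ℝ) (x : Z2) : Continuous fun ρ : Config => g (ρ x) :=
  (continuous_of_discreteTopology (f := g)).comp (continuous_apply x)

lemma Nice.step {F : Z2 → Config → ℝ} (hF : Nice F) (q : ℝ) : Nice (step q F) := by
  intro x
  unfold HV.step
  refine continuous_finsetSum _ fun b _ => continuous_finsetSum _ fun σ _ => ?_
  refine Continuous.mul (continuous_label (fun a => pr q a b / 2) x) ?_
  exact (hF _).comp (continuous_id.update x continuous_const)

lemma Nice.ev {F : Z2 → Config → ℝ} (hF : Nice F) (q : ℝ) (D : Set Z2) (T : ℕ) :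
    Nice (ev q D F T) := by
  induction T with
  | zero => exact hF
  | succ T ih =>
    intro x
    by_cases hx : x ∈ D
    · simpa [HV.ev, hx] using ih.step q x
    · simpa [HV.ev, hx] using hF x

lemma integrable_of_cont {ν : Measure Config} [IsProbabilityMeasure ν] {f : Config → ℝ}
    (hf : Continuous f) : Integrable f ν :=
  hf.integrable_of_hasCompactSupport (HasCompactSupport.of_compactSpace f)

end HV


namespace HV

/-! ### A logarithmic superharmonic function on the lattice -/

/-- The maximum norm on `ℤ²`. -/
def nm (x : Z2) : ℕ := max x.1.natAbs x.2.natAbs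

/-- The square `{x ≠ 0 : ‖x‖ < R}`, punctured at the origin. -/
noncomputable def box (R : ℕ) : Finset Z2 :=
  (Finset.Icc (-(R : ℤ)) R ×ˢ Finset.Icc (-(R : ℤ)) R).filter fun x => x ≠ 0 ∧ nm x < R

/-- The sphere of radius `k` in the maximum norm. -/
noncomputable def shell (k : ℕ) : Finset Z2 :=
  (Finset.Icc (-(k : ℤ)) k ×ˢ Finset.Icc (-(k : ℤ)) k).filter fun x => nm x = k

lemma mem_box {R : ℕ} {x : Z2} : x ∈ box R ↔ x ≠ 0 ∧ nm x < R := by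
  refine Finset.mem_filter.trans ⟨fun h => h.2, fun h => ⟨?_, h⟩⟩
  have := h.2
  unfold nm at this
  rw [Finset.mem_product, Finset.mem_Icc, Finset.mem_Icc]
  omega

lemma mem_shell {k : ℕ} {x : Z2} : x ∈ shell k ↔ nm x = k := by
  refine Finset.mem_filter.trans ⟨fun h => h.2, fun h => ⟨?_, h⟩⟩
  unfold nm at h
  rw [Finset.mem_product, Finset.mem_Icc, Finset.mem_Icc]
  omega

/-- The potential `log (|x|² - 1/2)`. The constant `1/2` is the one for which it is superharmonic
at every point whose neighbours are nonzero; the value at the origin is chosen small enough to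
preserve superharmonicity at the four neighbours of the origin. -/
noncomputable def pot (x : Z2) : ℝ :=
  if x = 0 then Real.log (1 / 128) else Real.log ((x.1 : ℝ) ^ 2 + (x.2 : ℝ) ^ 2 - 1 / 2)

/-- Half the difference between the expected increments of `pot` under a horizontal and under a
vertical step. -/
noncomputable def dpot (x : Z2) : ℝ :=
  (pot (x + (1, 0)) + pot (x + (-1, 0)) - pot (x + (0, 1)) - pot (x + (0, -1))) / 4

lemma one_le_sq_add_sq {x : Z2} (hx : x ≠ 0) : (1 : ℝ) ≤ (x.1 : ℝ) ^ 2 + (x.2 : ℝ) ^ 2 := by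
  have : (1 : ℤ) ≤ x.1 ^ 2 + x.2 ^ 2 := by
    have h : x.1 ≠ 0 ∨ x.2 ≠ 0 := by
      by_contra! h; exact hx (Prod.ext h.1 h.2)
    rcases h with h | h <;> have := sq_nonneg x.1 <;> have := sq_nonneg x.2 <;>
      have := pow_pos (abs_pos.2 h) 2 <;> rw [sq_abs] at this <;> omega
  exact_mod_cast this

lemma pot_of_ne {x : Z2} (hx : x ≠ 0) :
    pot x = Real.log ((x.1 : ℝ) ^ 2 + (x.2 : ℝ) ^ 2 - 1 / 2) := by simp [pot, hx]

lemma pot_neg_fst (a b : ℤ) : pot (-a, b) = pot (a, b) := by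
  simp [pot, Prod.ext_iff]

lemma pot_neg_snd (a b : ℤ) : pot (a, -b) = pot (a, b) := by
  simp [pot, Prod.ext_iff]

lemma pot_swap (a b : ℤ) : pot (a, b) = pot (b, a) := by
  simp only [pot, Prod.ext_iff, Prod.fst_zero, Prod.snd_zero]
  simp only [and_comm, add_comm]

lemma dpot_neg_fst (a b : ℤ) : dpot (-a, b) = dpot (a, b) := by
  have h1 := pot_neg_fst (a + 1) b
  have h2 := pot_neg_fst (a - 1) b
  have h3 := pot_neg_fst a (b + 1)
  have h4 := pot_neg_fst a (b - 1)
  simp only [neg_add_rev, neg_sub] at h1 h2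
  simp only [dpot, Prod.mk_add_mk, add_zero, ← sub_eq_add_neg]
  rw [h3, h4, ← h1, ← h2]; ring_nf

lemma dpot_swap (a b : ℤ) : dpot (a, b) = -dpot (b, a) := by
  simp only [dpot, Prod.mk_add_mk, add_zero]
  rw [pot_swap (a + 1), pot_swap (a + -1), pot_swap a, pot_swap a]; ring

lemma dpot_neg_snd (a b : ℤ) : dpot (a, -b) = dpot (a, b) := by
  rw [dpot_swap, dpot_neg_fst, ← dpot_swap]

/-- The polynomial identity behind superharmonicity: with `V = X² + Y² - 1/2`, the product of the
four neighbouring values of `V` is `V⁴ - 4 (X² - Y²)²`. -/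
lemma four_prod (X Y : ℝ) :
    ((X + 1) ^ 2 + Y ^ 2 - 1 / 2) * ((X - 1) ^ 2 + Y ^ 2 - 1 / 2) *
      ((X ^ 2 + (Y + 1) ^ 2 - 1 / 2) * (X ^ 2 + (Y - 1) ^ 2 - 1 / 2))
      ≤ (X ^ 2 + Y ^ 2 - 1 / 2) ^ 4 := by
  nlinarith [sq_nonneg (X ^ 2 - Y ^ 2)]

lemma pot_one_zero :
    pot (2, 0) + pot (0, 0) + pot (1, 1) + pot (1, -1) ≤ 4 * pot (1, 0) := by
  have e : pot (0, 0) = Real.log (1 / 128) := by simp [pot, Prod.ext_iff]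
  have e1 : pot (1, -1) = pot (1, 1) := pot_neg_snd 1 1
  have e2 : pot (1, 1) = Real.log (3 / 2) := by
    rw [pot_of_ne (by simp [Prod.ext_iff])]; norm_num
  have e3 : pot (2, 0) = Real.log (7 / 2) := by
    rw [pot_of_ne (by simp [Prod.ext_iff])]; norm_num
  have e4 : pot (1, 0) = Real.log (1 / 2) := by
    rw [pot_of_ne (by simp [Prod.ext_iff])]; norm_num
  rw [e1, e, e2, e3, e4, ← Real.log_mul (by norm_num) (by norm_num),
    ← Real.log_mul (by norm_num) (by norm_num), ← Real.log_mul (by norm_num) (by norm_num)]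
  have : 4 * Real.log (1 / 2) = Real.log ((1 / 2) ^ 4) := by rw [Real.log_pow]; norm_num
  rw [this]
  exact Real.log_le_log (by norm_num) (by norm_num)

lemma pot_super {x : Z2} (hx : x ≠ 0) :
    pot (x + (1, 0)) + pot (x + (-1, 0)) + pot (x + (0, 1)) + pot (x + (0, -1)) ≤ 4 * pot x := by
  by_cases h1 : x + (1, 0) = 0
  · obtain rfl : x = (-1, 0) := by
      rw [Prod.ext_iff] at h1 ⊢; simp at h1 ⊢; omega
    have := pot_one_zero
    have a1 := pot_neg_fst 2 0
    have a2 := pot_neg_fst 1 1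
    have a3 := pot_neg_fst 1 (-1)
    have a4 := pot_neg_fst 1 0
    norm_num at *
    linarith
  by_cases h2 : x + (-1, 0) = 0
  · obtain rfl : x = (1, 0) := by
      rw [Prod.ext_iff] at h2 ⊢; simp at h2 ⊢; omega
    have := pot_one_zero
    norm_num at *
    linarith
  by_cases h3 : x + (0, 1) = 0
  · obtain rfl : x = (0, -1) := by
      rw [Prod.ext_iff] at h3 ⊢; simp at h3 ⊢; omega
    have := pot_one_zero
    have a1 := pot_swap 0 (-2)
    have a2 := pot_swap 1 (-1)
    have a3 := pot_swap (-1) (-1)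
    have a4 := pot_swap 0 (-1)
    have b1 := pot_neg_fst 2 0
    have b2 := pot_neg_fst 1 1
    have b3 := pot_neg_fst 1 (-1)
    have b4 := pot_neg_fst 1 0
    norm_num at *
    linarith
  by_cases h4 : x + (0, -1) = 0
  · obtain rfl : x = (0, 1) := by
      rw [Prod.ext_iff] at h4 ⊢; simp at h4 ⊢; omega
    have := pot_one_zero
    have a1 := pot_swap 0 2
    have a2 := pot_swap (-1) 1
    have a4 := pot_swap 0 1
    norm_num at *
    linarith
  rw [pot_of_ne hx, pot_of_ne h1, pot_of_ne h2, pot_of_ne h3, pot_of_ne h4]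
  have p1 := one_le_sq_add_sq h1
  have p2 := one_le_sq_add_sq h2
  have p3 := one_le_sq_add_sq h3
  have p4 := one_le_sq_add_sq h4
  obtain ⟨a, b⟩ := x
  simp only [Prod.mk_add_mk, add_zero, Int.cast_add, Int.cast_sub, Int.cast_one,
    ← sub_eq_add_neg] at p1 p2 p3 p4 ⊢
  rw [← Real.log_mul (by linarith) (by linarith), add_assoc,
    ← Real.log_mul (by linarith) (by linarith)]
  rw [← Real.log_mul (mul_ne_zero (by linarith) (by linarith))
      (mul_ne_zero (by linarith) (by linarith)),
    show (4 : ℝ) * Real.log ((a : ℝ) ^ 2 + (b : ℝ) ^ 2 - 1 / 2)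
      = Real.log (((a : ℝ) ^ 2 + (b : ℝ) ^ 2 - 1 / 2) ^ 4) by rw [Real.log_pow]; norm_num]
  refine Real.log_le_log ?_ (four_prod _ _)
  refine mul_pos (mul_pos ?_ ?_) (mul_pos ?_ ?_) <;> linarith

lemma pot_ge_neg_one {x : Z2} (hx : x ≠ 0) : -1 ≤ pot x := by
  rw [pot_of_ne hx]
  have h := one_le_sq_add_sq hx
  have h2 : Real.log (1 / 2) ≤ Real.log ((x.1 : ℝ) ^ 2 + (x.2 : ℝ) ^ 2 - 1 / 2) :=
    Real.log_le_log (by norm_num) (by linarith)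
  have h3 := Real.one_sub_inv_le_log_of_pos (show (0 : ℝ) < 1 / 2 by norm_num)
  norm_num at h3 h2 ⊢
  linarith

lemma pot_ge_of_le_nm {x : Z2} {R : ℕ} (hR : 1 ≤ R) (hx : R ≤ nm x) :
    2 * Real.log R - 1 ≤ pot x := by
  have hR' : (1 : ℝ) ≤ R := by exact_mod_cast hR
  have hx0 : x ≠ 0 := by rintro rfl; simp [nm] at hx; omega
  have hsq : (R : ℝ) ^ 2 ≤ (x.1 : ℝ) ^ 2 + (x.2 : ℝ) ^ 2 := by
    rcases le_max_iff.1 hx with h | h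
    · have : (R : ℝ) ^ 2 ≤ (x.1 : ℝ) ^ 2 := by
        rw [sq_le_sq, ← Int.cast_abs, Int.abs_eq_natAbs, Nat.abs_cast]; exact_mod_cast h
      nlinarith [sq_nonneg (x.2 : ℝ)]
    · have : (R : ℝ) ^ 2 ≤ (x.2 : ℝ) ^ 2 := by
        rw [sq_le_sq, ← Int.cast_abs, Int.abs_eq_natAbs, Nat.abs_cast]; exact_mod_cast h
      nlinarith [sq_nonneg (x.1 : ℝ)]
  rw [pot_of_ne hx0]
  have h1 : Real.log ((R : ℝ) ^ 2 * (1 / 2))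
      ≤ Real.log ((x.1 : ℝ) ^ 2 + (x.2 : ℝ) ^ 2 - 1 / 2) :=
    Real.log_le_log (by positivity) (by nlinarith)
  rw [Real.log_mul (by positivity) (by norm_num), Real.log_pow] at h1
  have h3 := Real.one_sub_inv_le_log_of_pos (show (0 : ℝ) < 1 / 2 by norm_num)
  norm_num at h3 h1 ⊢
  linarith

/-- In the horizontal cone `|j| ≤ k`, `-dpot` agrees with `(k² - j²) / (k² + j²)²` up to an error
of order `k⁻⁴`. -/
lemma dpot_bounds {k j : ℤ} (hk : 2 ≤ k) (hj : |j| ≤ k) :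
    ((k : ℝ) ^ 2 - (j : ℝ) ^ 2) / ((k : ℝ) ^ 2 + (j : ℝ) ^ 2 + 1 / 2) ^ 2 ≤ -dpot (k, j) ∧
    -dpot (k, j) ≤ ((k : ℝ) ^ 2 - (j : ℝ) ^ 2) / ((k : ℝ) ^ 2 + (j : ℝ) ^ 2) ^ 2
      + 12 / (k : ℝ) ^ 4 := by
  have hk' : (2 : ℝ) ≤ k := by exact_mod_cast hk
  have hj' : (j : ℝ) ^ 2 ≤ (k : ℝ) ^ 2 := by
    have h : |(j : ℝ)| ≤ k := by exact_mod_cast hj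
    rw [sq_le_sq]; exact h.trans (le_abs_self _)
  have n1 : ((k, j) : Z2) + (1, 0) ≠ 0 := by simp [Prod.ext_iff]; omega
  have n2 : ((k, j) : Z2) + (-1, 0) ≠ 0 := by simp [Prod.ext_iff]; omega
  have n3 : ((k, j) : Z2) + (0, 1) ≠ 0 := by simp [Prod.ext_iff]; omega
  have n4 : ((k, j) : Z2) + (0, -1) ≠ 0 := by simp [Prod.ext_iff]; omega
  have p1 := one_le_sq_add_sq n1
  have p2 := one_le_sq_add_sq n2
  have p3 := one_le_sq_add_sq n3
  have p4 := one_le_sq_add_sq n4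
  have hd : -dpot (k, j) = Real.log
      (((k : ℝ) ^ 2 + (j : ℝ) ^ 2 + 1 / 2) ^ 2 - 4 * (j : ℝ) ^ 2) / 4 - Real.log
      (((k : ℝ) ^ 2 + (j : ℝ) ^ 2 + 1 / 2) ^ 2 - 4 * (k : ℝ) ^ 2) / 4 := by
    rw [dpot, pot_of_ne n1, pot_of_ne n2, pot_of_ne n3, pot_of_ne n4]
    simp only [Prod.mk_add_mk, add_zero, Int.cast_add, Int.cast_sub, Int.cast_one,
      ← sub_eq_add_neg] at p1 p2 p3 p4 ⊢
    rw [show ((k : ℝ) ^ 2 + (j : ℝ) ^ 2 + 1 / 2) ^ 2 - 4 * (j : ℝ) ^ 2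
      = ((k : ℝ) ^ 2 + ((j : ℝ) + 1) ^ 2 - 1 / 2) * ((k : ℝ) ^ 2 + ((j : ℝ) - 1) ^ 2 - 1 / 2) by
        ring, show ((k : ℝ) ^ 2 + (j : ℝ) ^ 2 + 1 / 2) ^ 2 - 4 * (k : ℝ) ^ 2
      = (((k : ℝ) + 1) ^ 2 + (j : ℝ) ^ 2 - 1 / 2) * (((k : ℝ) - 1) ^ 2 + (j : ℝ) ^ 2 - 1 / 2) by
        ring, Real.log_mul (by linarith) (by linarith), Real.log_mul (by linarith) (by linarith)]
    ring
  set X := (k : ℝ) ^ 2 with hX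
  set Y := (j : ℝ) ^ 2 with hY
  have hX4 : 4 ≤ X := by rw [hX]; nlinarith
  have hY0 : 0 ≤ Y := sq_nonneg _
  have hA : 0 < (X + Y + 1 / 2) ^ 2 - 4 * X := by nlinarith
  have hC : 0 < (X + Y + 1 / 2) ^ 2 - 4 * Y := by nlinarith
  rw [hd, ← sub_div, ← Real.log_div hC.ne' hA.ne']
  have hpos : 0 < ((X + Y + 1 / 2) ^ 2 - 4 * Y) / ((X + Y + 1 / 2) ^ 2 - 4 * X) := by positivity
  constructor
  · have := Real.one_sub_inv_le_log_of_pos hpos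
    have e : 1 - (((X + Y + 1 / 2) ^ 2 - 4 * Y) / ((X + Y + 1 / 2) ^ 2 - 4 * X))⁻¹
        = 4 * ((X - Y) / ((X + Y + 1 / 2) ^ 2 - 4 * Y)) := by
      rw [inv_div, one_sub_div hC.ne', ← mul_div_assoc]; congr 1; ring
    rw [e] at this
    have h2 : (X - Y) / (X + Y + 1 / 2) ^ 2 ≤ (X - Y) / ((X + Y + 1 / 2) ^ 2 - 4 * Y) :=
      div_le_div_of_nonneg_left (by linarith) hC (by linarith)
    linarith
  · have := Real.log_le_sub_one_of_pos hpos
    have e : ((X + Y + 1 / 2) ^ 2 - 4 * Y) / ((X + Y + 1 / 2) ^ 2 - 4 * X) - 1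
        = 4 * ((X - Y) / ((X + Y + 1 / 2) ^ 2 - 4 * X)) := by
      rw [div_sub_one hA.ne', ← mul_div_assoc]; congr 1; ring
    rw [e] at this
    have hq : (k : ℝ) ^ 4 = X ^ 2 := by rw [hX]; ring
    rw [hq]
    have hS : 0 < (X + Y) ^ 2 - 3 * (X + Y) := by nlinarith
    have h2 : (X - Y) / ((X + Y + 1 / 2) ^ 2 - 4 * X) ≤ (X - Y) / ((X + Y) ^ 2 - 3 * (X + Y)) :=
      div_le_div_of_nonneg_left (by linarith) hS (by nlinarith)
    have h3 : (X - Y) / ((X + Y) ^ 2 - 3 * (X + Y)) - (X - Y) / (X + Y) ^ 2 ≤ 12 / (X + Y) ^ 2 := by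
      have hs : 4 ≤ X + Y := by linarith
      have hXY : X - Y ≤ X + Y := by linarith
      set S := X + Y with hSdef
      have e1 : (X - Y) / (S ^ 2 - 3 * S) - (X - Y) / S ^ 2
          = (X - Y) * 3 / (S - 3) / S ^ 2 := by
        have : S - 3 ≠ 0 := by linarith
        have : S ≠ 0 := by linarith
        rw [show S ^ 2 - 3 * S = S * (S - 3) by ring]
        field_simp; ring
      rw [e1]
      apply div_le_div_of_nonneg_right _ (by positivity)
      rw [div_le_iff₀ (by linarith)]
      linarith
    have h4 : 12 / (X + Y) ^ 2 ≤ 12 / X ^ 2 := by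
      apply div_le_div_of_nonneg_left (by norm_num) (by positivity)
      nlinarith
    linarith

end HV


namespace HV

/-! ### The total strength of `dpot` on spheres -/

lemma sum_box (R : ℕ) (f : Z2 → ℝ) :
    ∑ y ∈ box R, f y = ∑ k ∈ Finset.Ico 1 R, ∑ y ∈ shell k, f y := by
  rw [← Finset.sum_fiberwise_of_maps_to (s := box R) (t := Finset.Ico 1 R) (g := nm)]
  · refine Finset.sum_congr rfl fun k hk => ?_
    refine Finset.sum_congr ?_ fun _ _ => rfl
    rw [Finset.mem_Ico] at hk
    ext x
    rw [Finset.mem_filter, mem_box, mem_shell]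
    refine ⟨fun h => h.2, fun h => ⟨⟨?_, by omega⟩, h⟩⟩
    rintro rfl
    simp [nm] at h; omega
  · intro x hx
    rw [mem_box] at hx
    rw [Finset.mem_Ico]
    refine ⟨?_, hx.2⟩
    by_contra h
    apply hx.1
    simp only [nm] at h
    rw [Prod.ext_iff]; simp; omega

/-- The point `(k, j)` or one of its images under the symmetries of the square. -/
def refl8 (k : ℕ) (p : Bool × Bool × Bool × ℕ) : Z2 :=
  let u : ℤ := if p.1 then k else -k
  let v : ℤ := if p.2.1 then p.2.2.2 else -p.2.2.2
  if p.2.2.1 then (u, v) else (v, u)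

lemma abs_dpot_refl8 (k : ℕ) (a b c : Bool) (j : ℕ) :
    |dpot (refl8 k (a, b, c, j))| = |dpot ((k : ℤ), (j : ℤ))| := by
  cases a <;> cases b <;> cases c <;>
    simp [refl8, dpot_neg_fst, dpot_neg_snd, dpot_swap (j : ℤ) k]

lemma shell_subset (k : ℕ) : shell k ⊆
    (Finset.univ ×ˢ Finset.univ ×ˢ Finset.univ ×ˢ Finset.range (k + 1)).image (refl8 k) := by
  intro x hx
  rw [mem_shell] at hx
  rw [Finset.mem_image]
  obtain ⟨a, b⟩ := x
  simp only [nm] at hx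
  rcases le_total a.natAbs b.natAbs with h | h
  · refine ⟨(decide (0 ≤ b), decide (0 ≤ a), false, a.natAbs), by simp; omega, ?_⟩
    rw [max_eq_right h] at hx
    simp only [refl8, Bool.false_eq_true, if_false, Prod.mk.injEq, decide_eq_true_eq]
    split_ifs <;> omega
  · refine ⟨(decide (0 ≤ a), decide (0 ≤ b), true, b.natAbs), by simp; omega, ?_⟩
    rw [max_eq_left h] at hx
    simp only [refl8, if_true, Prod.mk.injEq, decide_eq_true_eq]
    split_ifs <;> omega

lemma sum_shell_le (k : ℕ) :
    ∑ y ∈ shell k, |dpot y| ≤ 8 * ∑ j ∈ Finset.range (k + 1), |dpot ((k : ℤ), (j : ℤ))| := by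
  calc ∑ y ∈ shell k, |dpot y|
      ≤ ∑ y ∈ (Finset.univ ×ˢ Finset.univ ×ˢ Finset.univ ×ˢ Finset.range (k + 1)).image
          (refl8 k), |dpot y| :=
        Finset.sum_le_sum_of_subset_of_nonneg (shell_subset k) fun _ _ _ => abs_nonneg _
    _ ≤ ∑ p ∈ Finset.univ ×ˢ Finset.univ ×ˢ Finset.univ ×ˢ Finset.range (k + 1),
          |dpot (refl8 k p)| :=
        Finset.sum_image_le_of_nonneg fun _ _ => abs_nonneg _
    _ = _ := by
        simp only [Finset.sum_product, abs_dpot_refl8, Finset.sum_const, Finset.card_univ,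
          Fintype.card_bool, nsmul_eq_mul]
        push_cast; ring

lemma sum_cone_le {k : ℕ} (hk : 2 ≤ k) :
    ∑ j ∈ Finset.range (k + 1), |dpot ((k : ℤ), (j : ℤ))| ≤ 1 / (2 * k) + 19 / (k : ℝ) ^ 2 := by
  have hk' : (2 : ℝ) ≤ k := by exact_mod_cast hk
  have hk0 : (0 : ℝ) < k := by linarith
  have key : ∀ j ≤ k, |dpot ((k : ℤ), (j : ℤ))| ≤
      ((k : ℝ) ^ 2 - (j : ℝ) ^ 2) / ((k : ℝ) ^ 2 + (j : ℝ) ^ 2) ^ 2 + 12 / (k : ℝ) ^ 4 := by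
    intro j hj
    have hj' : (j : ℝ) ≤ k := by exact_mod_cast hj
    have := dpot_bounds (k := k) (j := j) (by exact_mod_cast hk) (by
      rw [abs_of_nonneg (by positivity)]; exact_mod_cast hj)
    push_cast at this
    have h0 : 0 ≤ ((k : ℝ) ^ 2 - (j : ℝ) ^ 2) / ((k : ℝ) ^ 2 + (j : ℝ) ^ 2 + 1 / 2) ^ 2 :=
      div_nonneg (by nlinarith [Nat.cast_nonneg (α := ℝ) j]) (by positivity)
    rw [abs_of_nonpos (by linarith [this.1])]
    exact this.2
  have tel : ∀ n ≤ k, ∑ j ∈ Finset.range (n + 1),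
      ((k : ℝ) ^ 2 - (j : ℝ) ^ 2) / ((k : ℝ) ^ 2 + (j : ℝ) ^ 2) ^ 2
        ≤ 1 / (k : ℝ) ^ 2 + n / ((k : ℝ) ^ 2 + (n : ℝ) ^ 2) := by
    intro n hn
    induction n with
    | zero =>
      simp
      rw [pow_two ((k : ℝ) ^ 2), div_mul_cancel_left₀ (by positivity)]
    | succ n ih =>
      rw [Finset.sum_range_succ]
      have ih := ih (by omega)
      have hn' : (n : ℝ) + 1 ≤ k := by exact_mod_cast hn
      have hn0 : (0 : ℝ) ≤ n := n.cast_nonneg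
      push_cast
      -- The summand is the derivative of `x / (k² + x²)`, a concave function on this range.
      have : ((k : ℝ) ^ 2 - ((n : ℝ) + 1) ^ 2) / ((k : ℝ) ^ 2 + ((n : ℝ) + 1) ^ 2) ^ 2 ≤
          ((n : ℝ) + 1) / ((k : ℝ) ^ 2 + ((n : ℝ) + 1) ^ 2) - n / ((k : ℝ) ^ 2 + (n : ℝ) ^ 2) := by
        rw [div_sub_div _ _ (by positivity) (by positivity), div_le_div_iff₀ (by positivity)
          (by positivity)]
        have hA : 0 ≤ (k : ℝ) ^ 2 - ((n : ℝ) + 1) ^ 2 := by nlinarith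
        have h2 : ((k : ℝ) ^ 2 - ((n : ℝ) + 1) ^ 2) * ((k : ℝ) ^ 2 + (n : ℝ) ^ 2) ≤
            (((k : ℝ) ^ 2 - ((n : ℝ) + 1) ^ 2) + (n + 1)) *
              ((k : ℝ) ^ 2 + ((n : ℝ) + 1) ^ 2) :=
          mul_le_mul (by linarith) (by nlinarith) (by positivity) (by linarith)
        have h3 := mul_le_mul_of_nonneg_right h2
          (show 0 ≤ (k : ℝ) ^ 2 + ((n : ℝ) + 1) ^ 2 by positivity)
        nlinarith [h3]
      linarith
  calc ∑ j ∈ Finset.range (k + 1), |dpot ((k : ℤ), (j : ℤ))|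
      ≤ ∑ j ∈ Finset.range (k + 1), (((k : ℝ) ^ 2 - (j : ℝ) ^ 2) /
          ((k : ℝ) ^ 2 + (j : ℝ) ^ 2) ^ 2 + 12 / (k : ℝ) ^ 4) :=
        Finset.sum_le_sum fun j hj => key j (by rw [Finset.mem_range] at hj; omega)
    _ ≤ (1 / (k : ℝ) ^ 2 + k / ((k : ℝ) ^ 2 + (k : ℝ) ^ 2)) + (k + 1) * (12 / (k : ℝ) ^ 4) := by
        rw [Finset.sum_add_distrib]
        refine add_le_add (tel k le_rfl) (le_of_eq ?_)
        simp
    _ ≤ _ := by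
        have e1 : (k : ℝ) / ((k : ℝ) ^ 2 + (k : ℝ) ^ 2) = 1 / (2 * k) := by field_simp; ring
        have e2 : ((k : ℝ) + 1) * (12 / (k : ℝ) ^ 4) ≤ 18 / (k : ℝ) ^ 2 := by
          rw [← mul_div_assoc, div_le_div_iff₀ (by positivity) (by positivity)]
          have : ((k : ℝ) + 1) * 12 ≤ 18 * k := by linarith
          nlinarith [mul_le_mul_of_nonneg_right this (show 0 ≤ (k : ℝ) ^ 2 by positivity),
            show (18 * (k : ℝ)) * (k : ℝ) ^ 2 ≤ 18 * (k : ℝ) ^ 4 by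
              nlinarith [show 0 ≤ (k : ℝ) ^ 3 by positivity]]
        rw [e1]
        have e3 : 19 / (k : ℝ) ^ 2 = 1 / (k : ℝ) ^ 2 + 18 / (k : ℝ) ^ 2 := by ring
        linarith

/-- The sum of `|dpot|` over the sphere of radius `k`. -/
noncomputable def dl (k : ℕ) : ℝ := ∑ y ∈ shell k, |dpot y|

lemma dl_nonneg (k : ℕ) : 0 ≤ dl k := Finset.sum_nonneg fun _ _ => abs_nonneg _

lemma dl_le : ∃ C : ℝ, 0 ≤ C ∧ ∀ k : ℕ, 1 ≤ k → dl k ≤ 4 / k + C / (k : ℝ) ^ 2 := by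
  refine ⟨152 + dl 1, by have := dl_nonneg 1; linarith, fun k hk => ?_⟩
  rcases hk.eq_or_lt with rfl | hk
  · norm_num; linarith
  · have h1 := sum_shell_le k
    have h2 := sum_cone_le hk
    have hk0 : (0 : ℝ) < k := by exact_mod_cast (by omega : 0 < k)
    have h3 : 152 / (k : ℝ) ^ 2 ≤ (152 + dl 1) / (k : ℝ) ^ 2 := by
      gcongr; linarith [dl_nonneg 1]
    have e : 8 * (1 / (2 * (k : ℝ)) + 19 / (k : ℝ) ^ 2) = 4 / k + 152 / (k : ℝ) ^ 2 := by
      field_simp; ring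
    unfold dl
    unfold dl at h3
    linarith

lemma sum_inv_sq_le (n : ℕ) : ∑ k ∈ Finset.Ico 1 n, 1 / (k : ℝ) ^ 2 ≤ 2 := by
  have : ∀ m : ℕ, ∑ k ∈ Finset.Ico 1 (m + 2), 1 / (k : ℝ) ^ 2 ≤ 2 - 1 / ((m : ℝ) + 1) := by
    intro m
    induction m with
    | zero => norm_num
    | succ m ih =>
      rw [Finset.sum_Ico_succ_top (by omega)]
      have hm : (0 : ℝ) ≤ m := m.cast_nonneg
      have : 1 / ((m + 2 : ℕ) : ℝ) ^ 2 ≤ 1 / ((m : ℝ) + 1) - 1 / ((m : ℝ) + 1 + 1) := by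
        push_cast
        rw [div_sub_div _ _ (by positivity) (by positivity), div_le_div_iff₀ (by positivity)
          (by positivity)]
        nlinarith
      push_cast at this ⊢
      linarith
  rcases n with _ | _ | m
  · simp
  · simp
  · have h := this m
    have : 0 ≤ 1 / ((m : ℝ) + 1) := by positivity
    linarith

lemma sum_inv_le (n : ℕ) : ∑ k ∈ Finset.Ico 1 n, 1 / (k : ℝ) ≤ 1 + Real.log n := by
  have h := harmonic_le_one_add_log n
  rw [harmonic_eq_sum_Icc] at h
  push_cast at h
  refine le_trans ?_ h
  simp only [one_div]
  refine Finset.sum_le_sum_of_subset_of_nonneg ?_ fun _ _ _ => by positivity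
  intro k hk
  rw [Finset.mem_Ico] at hk
  rw [Finset.mem_Icc]
  omega

lemma le_sum_inv {n : ℕ} (hn : 1 ≤ n) : Real.log n ≤ ∑ k ∈ Finset.Ico 1 n, 1 / (k : ℝ) := by
  induction n, hn using Nat.le_induction with
  | base => simp
  | succ n hn ih =>
    rw [Finset.sum_Ico_succ_top hn]
    have hn0 : (0 : ℝ) < n := by exact_mod_cast hn
    have : Real.log (n + 1 : ℕ) - Real.log n ≤ 1 / n := by
      rw [← Real.log_div (by positivity) (by positivity)]
      have := Real.log_le_sub_one_of_pos (show 0 < ((n + 1 : ℕ) : ℝ) / n by positivity)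
      have e : ((n + 1 : ℕ) : ℝ) / n - 1 = 1 / n := by push_cast; field_simp; ring
      linarith
    linarith

lemma sum_abs_dpot : ∃ C : ℝ, 0 ≤ C ∧ ∀ R : ℕ, 1 ≤ R →
    ∑ y ∈ box R, |dpot y| ≤ 4 * Real.log R + C := by
  obtain ⟨C, hC0, hC⟩ := dl_le
  refine ⟨4 + 2 * C, by linarith, fun R hR => ?_⟩
  rw [sum_box]
  calc ∑ k ∈ Finset.Ico 1 R, dl k
      ≤ ∑ k ∈ Finset.Ico 1 R, (4 * (1 / (k : ℝ)) + C * (1 / (k : ℝ) ^ 2)) :=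
        Finset.sum_le_sum fun k hk => by
          rw [Finset.mem_Ico] at hk
          have := hC k hk.1
          rw [mul_one_div, mul_one_div]; exact this
    _ ≤ _ := by
        rw [Finset.sum_add_distrib, ← Finset.mul_sum, ← Finset.mul_sum]
        nlinarith [sum_inv_le R, sum_inv_sq_le R]

lemma abs_dpot_le : ∃ C : ℝ, 0 ≤ C ∧ ∀ y : Z2, y ≠ 0 → |dpot y| ≤ C := by
  obtain ⟨C, hC0, hC⟩ := dl_le
  refine ⟨4 + C, by linarith, fun y hy => ?_⟩
  have h1 : 1 ≤ nm y := by
    by_contra h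
    apply hy
    simp only [nm] at h
    rw [Prod.ext_iff]; simp; omega
  have h2 : |dpot y| ≤ dl (nm y) :=
    Finset.single_le_sum (f := fun y => |dpot y|) (fun _ _ => abs_nonneg _) (mem_shell.2 rfl)
  have h3 := hC _ h1
  have hk : (1 : ℝ) ≤ nm y := by exact_mod_cast h1
  have h4 : 4 / (nm y : ℝ) ≤ 4 := div_le_self (by norm_num) hk
  have h5 : C / (nm y : ℝ) ^ 2 ≤ C := div_le_self hC0 (by nlinarith)
  linarith

end HV


namespace HV

/-! ### Invariance of the uniform product measure -/

lemma measurableSet_cyl (F : Finset Z2) (g : Z2 → Bool) :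
    MeasurableSet {ρ : Config | ∀ x ∈ F, ρ x = g x} := by
  have : {ρ : Config | ∀ x ∈ F, ρ x = g x} = ⋂ x ∈ F, (fun ρ : Config => ρ x) ⁻¹' {g x} := by
    ext; simp
  rw [this]
  exact Finset.measurableSet_biInter _ fun x _ => measurable_pi_apply x (measurableSet_singleton _)

lemma IsIUD.unique {ν ν' : Measure Config} [IsProbabilityMeasure ν] [IsProbabilityMeasure ν']
    (h : IsIUD ν) (h' : IsIUD ν') : ν = ν' := by
  refine ext_of_generate_finite
    {S | ∃ (F : Finset Z2) (g : Z2 → Bool), S = {ρ : Config | ∀ x ∈ F, ρ x = g x}} ?_ ?_ ?_ ?_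
  · apply le_antisymm
    · refine iSup_le fun x => ?_
      rw [← measurable_iff_comap_le]
      refine @measurable_to_countable' _ _ _ _ (MeasurableSpace.generateFrom _) _ fun b => ?_
      refine MeasurableSpace.measurableSet_generateFrom ⟨{x}, fun _ => b, ?_⟩
      ext ρ; simp
    · refine MeasurableSpace.generateFrom_le ?_
      rintro S ⟨F, g, rfl⟩
      exact measurableSet_cyl F g
  · rintro S ⟨F, g, rfl⟩ T ⟨G, g', rfl⟩ ⟨ρ₀, h1, h2⟩
    classical
    refine ⟨F ∪ G, ρ₀, ?_⟩
    ext ρ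
    simp only [Set.mem_inter_iff, Set.mem_ofPred_eq, Finset.mem_union] at h1 h2 ⊢
    constructor
    · rintro ⟨h3, h4⟩ x (hx | hx)
      · rw [h3 x hx, h1 x hx]
      · rw [h4 x hx, h2 x hx]
    · intro h3
      exact ⟨fun x hx => by rw [h3 x (Or.inl hx), h1 x hx],
        fun x hx => by rw [h3 x (Or.inr hx), h2 x hx]⟩
  · rintro S ⟨F, g, rfl⟩
    rw [h F g, h' F g]
  · simp

/-- Reverse all labels on `A`. -/
def flip (A : Finset Z2) (ρ : Config) : Config := fun x => if x ∈ A then !ρ x else ρ x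

/-- Translate the labels so that `v` becomes the origin. -/
def shift (v : Z2) (ρ : Config) : Config := fun x => ρ (x + v)

lemma continuous_flip (A : Finset Z2) : Continuous (flip A) := by
  refine continuous_pi fun x => ?_
  unfold flip
  by_cases hx : x ∈ A
  · simp only [hx, if_true]
    exact (continuous_of_discreteTopology (f := Bool.not)).comp (continuous_apply x)
  · simp only [hx, if_false]
    exact continuous_apply x

lemma continuous_shift (v : Z2) : Continuous (shift v) :=
  continuous_pi fun x => continuous_apply (x + v)

lemma IsIUD.map_flip {ν : Measure Config} [IsProbabilityMeasure ν] (h : IsIUD ν)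
    (A : Finset Z2) : ν.map (flip A) = ν := by
  have hm : Measurable (flip A) := (continuous_flip A).measurable
  have : IsProbabilityMeasure (ν.map (flip A)) := Measure.isProbabilityMeasure_map hm.aemeasurable
  refine IsIUD.unique (fun F g => ?_) h
  rw [Measure.map_apply hm (measurableSet_cyl F g), ← h F (flip A g)]
  congr 1
  ext ρ
  simp only [Set.mem_preimage, Set.mem_ofPred_eq, flip]
  refine forall₂_congr fun x _ => ?_
  split_ifs <;> cases ρ x <;> cases g x <;> simp

lemma IsIUD.map_shift {ν : Measure Config} [IsProbabilityMeasure ν] (h : IsIUD ν)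
    (v : Z2) : ν.map (shift v) = ν := by
  have hm : Measurable (shift v) := (continuous_shift v).measurable
  have : IsProbabilityMeasure (ν.map (shift v)) := Measure.isProbabilityMeasure_map hm.aemeasurable
  refine IsIUD.unique (fun F g => ?_) h
  rw [Measure.map_apply hm (measurableSet_cyl F g), ← Finset.card_map (addRightEmbedding v) (s := F),
    ← h (F.map (addRightEmbedding v)) (fun x => g (x - v))]
  congr 1
  ext ρ
  constructor
  · intro h x hx
    obtain ⟨y, hy, rfl⟩ := Finset.mem_map.1 hx
    simpa [shift] using h y hy
  · intro h x hx
    simpa [shift] using h (x + v) (Finset.mem_map.2 ⟨x, hx, rfl⟩)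

lemma IsIUD.integral_flip {ν : Measure Config} [IsProbabilityMeasure ν] (h : IsIUD ν)
    (A : Finset Z2) {f : Config → ℝ} (hf : Continuous f) :
    ∫ ρ, f (flip A ρ) ∂ν = ∫ ρ, f ρ ∂ν := by
  conv_rhs => rw [← h.map_flip A]
  rw [integral_map (continuous_flip A).measurable.aemeasurable
    hf.aestronglyMeasurable]

/-- The sign attached to a label. -/
def sg (b : Bool) : ℝ := if b then 1 else -1

lemma sg_not (b : Bool) : sg (!b) = -sg b := by cases b <;> simp [sg]

lemma sg_mul_self (b : Bool) : sg b * sg b = 1 := by cases b <;> simp [sg]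

lemma abs_sg (b : Bool) : |sg b| = 1 := by cases b <;> simp [sg]

/-- The random field entering the supermartingale. -/
noncomputable def fld (R : ℕ) (ρ : Config) : ℝ := ∑ y ∈ box R, sg (ρ y) * dpot y

lemma continuous_sg (y : Z2) : Continuous fun ρ : Config => sg (ρ y) := continuous_label sg y

lemma continuous_fld (R : ℕ) : Continuous (fld R) :=
  continuous_finsetSum _ fun y _ => (continuous_sg y).mul continuous_const

lemma IsIUD.integral_sg {ν : Measure Config} [IsProbabilityMeasure ν] (h : IsIUD ν) (y : Z2) :
    ∫ ρ, sg (ρ y) ∂ν = 0 := by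
  have h1 := h.integral_flip {y} (f := fun ρ => sg (ρ y)) (continuous_sg y)
  simp only [flip, Finset.mem_singleton, if_true, sg_not, integral_neg] at h1
  linarith

lemma IsIUD.integral_sg_mul {ν : Measure Config} [IsProbabilityMeasure ν] (h : IsIUD ν)
    {y z : Z2} (hyz : z ≠ y) : ∫ ρ, sg (ρ y) * sg (ρ z) ∂ν = 0 := by
  have h1 := h.integral_flip {y} (f := fun ρ => sg (ρ y) * sg (ρ z))
    ((continuous_sg y).mul (continuous_sg z))
  simp only [flip, Finset.mem_singleton, if_true, sg_not, hyz, if_false, neg_mul,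
    integral_neg] at h1
  linarith

lemma IsIUD.integral_fld {ν : Measure Config} [IsProbabilityMeasure ν] (h : IsIUD ν) (R : ℕ) :
    ∫ ρ, fld R ρ ∂ν = 0 := by
  have hc : ∀ y : Z2, Continuous fun ρ : Config => sg (ρ y) * dpot y :=
    fun y => (continuous_sg y).mul continuous_const
  unfold fld
  rw [integral_finsetSum _ fun y _ => integrable_of_cont (hc y)]
  simp [integral_mul_const, h.integral_sg]

lemma IsIUD.integral_fld_sq {ν : Measure Config} [IsProbabilityMeasure ν] (h : IsIUD ν) (R : ℕ) :
    ∫ ρ, fld R ρ ^ 2 ∂ν = ∑ y ∈ box R, dpot y ^ 2 := by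
  have e : ∀ ρ, fld R ρ ^ 2
      = ∑ y ∈ box R, ∑ z ∈ box R, sg (ρ y) * sg (ρ z) * (dpot y * dpot z) := by
    intro ρ
    rw [fld, sq, Finset.sum_mul_sum]
    refine Finset.sum_congr rfl fun y _ => Finset.sum_congr rfl fun z _ => by ring
  have hc : ∀ y z : Z2, Continuous fun ρ : Config => sg (ρ y) * sg (ρ z) * (dpot y * dpot z) :=
    fun y z => ((continuous_sg y).mul (continuous_sg z)).mul continuous_const
  simp only [e]
  rw [integral_finsetSum _ fun y _ =>
    integrable_of_cont (continuous_finsetSum _ fun z _ => hc y z)]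
  refine Finset.sum_congr rfl fun y hy => ?_
  rw [integral_finsetSum _ fun z _ => integrable_of_cont (hc y z)]
  rw [Finset.sum_eq_single_of_mem y hy]
  · simp [sg_mul_self, sq]
  · intro z _ hz
    rw [integral_mul_const, h.integral_sg_mul hz, zero_mul]

/-- The field is of smaller order than `log R`. -/
lemma IsIUD.integral_abs_fld {ν : Measure Config} [IsProbabilityMeasure ν] (h : IsIUD ν)
    {η : ℝ} (hη : 0 < η) : ∃ C : ℝ, ∀ R : ℕ, 1 ≤ R →
    ∫ ρ, |fld R ρ| ∂ν ≤ η * Real.log R + C := by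
  obtain ⟨C1, hC1, h1⟩ := sum_abs_dpot
  obtain ⟨C2, hC2, h2⟩ := abs_dpot_le
  set ε : ℝ := η / (4 * (C2 + 1)) with hε
  have hε0 : 0 < ε := by positivity
  refine ⟨ε * C2 * C1 + 1 / (4 * ε), fun R hR => ?_⟩
  have hlog : 0 ≤ Real.log R := Real.log_nonneg (by exact_mod_cast hR)
  have hpt : ∀ ρ, |fld R ρ| ≤ ε * fld R ρ ^ 2 + 1 / (4 * ε) := by
    intro ρ
    have : 0 ≤ ε * (|fld R ρ| - 1 / (2 * ε)) ^ 2 := by positivity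
    have e : ε * (|fld R ρ| - 1 / (2 * ε)) ^ 2
        = ε * fld R ρ ^ 2 + 1 / (4 * ε) - |fld R ρ| := by
      rw [sub_sq, sq_abs]; field_simp; ring
    linarith
  have i1 : Integrable (fun ρ => ε * fld R ρ ^ 2) ν :=
    integrable_of_cont (continuous_const.mul ((continuous_fld R).pow 2))
  have hint : ∫ ρ, |fld R ρ| ∂ν ≤ ε * (∑ y ∈ box R, dpot y ^ 2) + 1 / (4 * ε) := by
    refine (integral_mono (integrable_of_cont (continuous_fld R).abs)
      (i1.add (integrable_const _)) hpt).trans (le_of_eq ?_)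
    simp only [Pi.add_apply]
    rw [integral_add i1 (integrable_const _), integral_const_mul, h.integral_fld_sq]
    simp
  have hsq : ∑ y ∈ box R, dpot y ^ 2 ≤ C2 * (4 * Real.log R + C1) := by
    calc ∑ y ∈ box R, dpot y ^ 2 ≤ ∑ y ∈ box R, C2 * |dpot y| :=
          Finset.sum_le_sum fun y hy => by
            rw [← sq_abs, sq]
            exact mul_le_mul_of_nonneg_right (h2 y (mem_box.1 hy).1) (abs_nonneg _)
      _ ≤ _ := by rw [← Finset.mul_sum]; exact mul_le_mul_of_nonneg_left (h1 R hR) hC2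
  have hle : ε * (C2 * (4 * Real.log R)) ≤ η * Real.log R := by
    have : ε * (C2 * 4) ≤ η := by
      rw [hε, div_mul_eq_mul_div, div_le_iff₀ (by positivity)]
      nlinarith
    nlinarith
  nlinarith [mul_le_mul_of_nonneg_left hsq hε0.le]

end HV


namespace HV

/-! ### The supermartingale and the main inequality -/

/-- The indicator of the complement of the open square of radius `R`. -/
def ex (R : ℕ) (x : Z2) (_ : Config) : ℝ := if R ≤ nm x then 1 else 0

/-- The coefficient of the field in the supermartingale. -/
noncomputable def cc (q : ℝ) : ℝ := (1 - 2 * q) / (2 * q)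

/-- The supermartingale, as a function of the state. -/
noncomputable def spm (q : ℝ) (R : ℕ) (x : Z2) (ρ : Config) : ℝ := pot x + cc q * fld R ρ

lemma fld_update {R : ℕ} {x : Z2} (hx : x ∈ box R) (ρ : Config) (b : Bool) :
    fld R (Function.update ρ x b) = fld R ρ + (sg b - sg (ρ x)) * dpot x := by
  unfold fld
  rw [← Finset.add_sum_erase _ _ hx, ← Finset.add_sum_erase (box R) _ hx]
  have : ∑ y ∈ (box R).erase x, sg (Function.update ρ x b y) * dpot y
      = ∑ y ∈ (box R).erase x, sg (ρ y) * dpot y :=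
    Finset.sum_congr rfl fun y hy => by
      rw [Function.update_of_ne (Finset.ne_of_mem_erase hy)]
  rw [this, Function.update_self]
  ring

lemma spm_super {q : ℝ} (h0 : 0 < q) {R : ℕ} {x : Z2} (hx : x ∈ box R) (ρ : Config) :
    step q (spm q R) x ρ ≤ spm q R x ρ := by
  have h := pot_super (mem_box.1 hx).1
  rw [step_eq]
  simp only [spm, fld_update hx]
  have hc : cc q * (2 * q) = 1 - 2 * q := by
    unfold cc; field_simp
  set a1 := pot (x + (1, 0))
  set a2 := pot (x + (-1, 0))
  set a3 := pot (x + (0, 1))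
  set a4 := pot (x + (0, -1))
  have hd : dpot x = (a1 + a2 - a3 - a4) / 4 := rfl
  rw [hd]
  cases ρ x
  · simp only [sg, pr, if_true, Bool.false_eq_true, if_false]
    linear_combination h / 4 + (a1 + a2 - a3 - a4) / 4 * hc
  · simp only [sg, pr, if_true, Bool.false_eq_true, if_false, Bool.true_eq_false]
    linear_combination h / 4 - (a1 + a2 - a3 - a4) / 4 * hc

lemma nm_zero : nm 0 = 0 := by simp [nm]

lemma one_le_nm {y : Z2} (hy : y ≠ 0) : 1 ≤ nm y := by
  by_contra h
  apply hy
  simp only [nm] at h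
  rw [Prod.ext_iff]; simp; omega

lemma ex_nonneg (R : ℕ) (x : Z2) (ρ : Config) : 0 ≤ ex R x ρ := by
  unfold ex; split_ifs <;> norm_num

lemma ex_le_one (R : ℕ) (x : Z2) (ρ : Config) : ex R x ρ ≤ 1 := by
  unfold ex; split_ifs <;> norm_num

/-- The indicator that the walk sits at the origin, having changed the label of `y`. -/
def chg (y : Z2) (ρ₀ : Config) (x : Z2) (ρ : Config) : ℝ :=
  if x = 0 ∧ ρ y ≠ ρ₀ y then 1 else 0

lemma chg_nonneg (y : Z2) (ρ₀ : Config) (x : Z2) (ρ : Config) : 0 ≤ chg y ρ₀ x ρ := by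
  unfold chg; split_ifs <;> norm_num

/-- To change the label of `y` and then be at the origin, or to leave the square of radius `R`,
the walk must first leave the square of radius `‖y‖`. -/
lemma ev_chg_le {q : ℝ} (h0 : 0 ≤ q) (h1 : q ≤ 1) {R : ℕ} {y : Z2} (hy : 1 ≤ nm y)
    (hR : nm y ≤ R) (ρ₀ : Config) (T : ℕ) (x : Z2) (ρ : Config) (hρ : ρ y = ρ₀ y) :
    ev q (box R) (fun x ρ => chg y ρ₀ x ρ + ex R x ρ) T x ρ
      ≤ ev q (box (nm y)) (ex (nm y)) T x ρ := by
  have hle : ∀ x ρ, chg y ρ₀ x ρ + ex R x ρ ≤ 1 := by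
    intro x ρ
    unfold chg ex
    split_ifs with h2 h3
    · rw [h2.1, nm_zero] at h3; omega
    all_goals norm_num
  induction T generalizing x ρ with
  | zero =>
    rw [ev_zero, ev_zero]
    unfold chg ex
    simp only [hρ, ne_eq, not_true_eq_false, and_false, if_false, zero_add]
    split_ifs with h2 h3 <;> first | (exfalso; omega) | norm_num
  | succ T ih =>
    by_cases hx : x ∈ box (nm y)
    · have hx' := mem_box.1 hx
      have hxR : x ∈ box R := mem_box.2 ⟨hx'.1, by omega⟩
      rw [ev_succ_mem _ _ _ (Finset.mem_coe.2 hx), ev_succ_mem _ _ _ (Finset.mem_coe.2 hxR)]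
      refine step_mono h0 h1 fun b σ => ih _ _ ?_
      rw [Function.update_of_ne, hρ]
      rintro rfl
      omega
    · rw [ev_notMem (D := (box (nm y) : Set Z2)) q _ _ (by simpa using hx)]
      by_cases hx0 : x = 0
      · subst hx0
        rw [ev_notMem (D := (box R : Set Z2)) q _ _ (by simp [mem_box])]
        unfold chg ex
        simp only [hρ, ne_eq, not_true_eq_false, and_false, if_false, zero_add]
        have := nm_zero
        split_ifs with h2 h3 <;> first | (exfalso; omega) | norm_num
      · have : nm y ≤ nm x := by
          by_contra h; exact hx (mem_box.2 ⟨hx0, by omega⟩)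
        rw [show ex (nm y) x ρ = 1 by simp [ex, this]]
        exact ev_le_one h0 h1 hle _ _ _

/-- The probability of reaching distance `R` before the origin, within time `T`. -/
noncomputable def ep (q : ℝ) (R T : ℕ) (x : Z2) (ρ : Config) : ℝ :=
  ev q (box R) (ex R) T x ρ

lemma ep_anti {q : ℝ} (h0 : 0 ≤ q) (h1 : q ≤ 1) {k R : ℕ} (hk : 1 ≤ k) (hR : k ≤ R) (T : ℕ)
    (x : Z2) (ρ : Config) : ep q R T x ρ ≤ ep q k T x ρ := by
  have hn : nm ((k : ℤ), 0) = k := by simp [nm]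
  have h := ev_chg_le h0 h1 (R := R) (y := ((k : ℤ), 0)) (by omega) (by omega) ρ T x ρ rfl
  rw [hn] at h
  refine le_trans ?_ h
  exact ev_mono h0 h1 (fun x ρ' => by linarith [chg_nonneg ((k : ℤ), 0) ρ x ρ']) T x ρ

lemma ep_mono {q : ℝ} (h0 : 0 ≤ q) (h1 : q ≤ 1) (R : ℕ) (x : Z2) (ρ : Config) :
    Monotone fun T => ep q R T x ρ := by
  refine ev_monotone h0 h1 (fun x hx ρ => ?_) x ρ
  have hx' := mem_box.1 (Finset.mem_coe.1 hx)
  rw [show ex R x ρ = 0 by simp [ex]; omega]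
  exact step_nonneg h0 h1 fun b σ => ex_nonneg _ _ _

/-- The indicator of the punctured square. -/
noncomputable def inb (R : ℕ) (x : Z2) (_ : Config) : ℝ := if x ∈ box R then 1 else 0

/-- The walk leaves the square in finite time: the probability of still being inside at time `T`
is at most `2 R² / T`. -/
lemma ev_inb_le {q : ℝ} (h0 : 0 ≤ q) (h1 : q ≤ 1) (R T : ℕ) (x : Z2) (ρ : Config) :
    T * ev q (box R) (inb R) T x ρ ≤ 2 * (R : ℝ) ^ 2 := by
  -- `|x|²` grows by one on average in each step, and is bounded until the exit.
  have key : ∀ (T : ℕ) (x : Z2) (ρ : Config), nm x ≤ R →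
      T * ev q (box R) (inb R) T x ρ ≤ 2 * (R : ℝ) ^ 2 - (x.1 : ℝ) ^ 2 - (x.2 : ℝ) ^ 2 := by
    intro T
    have hnn : ∀ x : Z2, nm x ≤ R → 0 ≤ 2 * (R : ℝ) ^ 2 - (x.1 : ℝ) ^ 2 - (x.2 : ℝ) ^ 2 := by
      intro x hx
      have hh : ∀ a : ℤ, a.natAbs ≤ R → (a : ℝ) ^ 2 ≤ (R : ℝ) ^ 2 := fun a ha => by
        rw [sq_le_sq, ← Int.cast_abs, Int.abs_eq_natAbs, Nat.abs_cast]; exact_mod_cast ha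
      have := hh x.1 ((le_max_left _ _).trans hx)
      have := hh x.2 ((le_max_right _ _).trans hx)
      linarith
    induction T with
    | zero => intro x ρ hx; simpa using hnn x hx
    | succ T ih =>
      intro x ρ hx
      by_cases hxR : x ∈ box R
      · have hx' := mem_box.1 hxR
        have hle : ev q (box R) (inb R) (T + 1) x ρ ≤ 1 :=
          ev_le_one h0 h1 (fun x ρ => by unfold inb; split_ifs <;> norm_num) _ _ _
        have hst : T * ev q (box R) (inb R) (T + 1) x ρ ≤
            step q (fun x _ => 2 * (R : ℝ) ^ 2 - (x.1 : ℝ) ^ 2 - (x.2 : ℝ) ^ 2) x ρ := by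
          rw [ev_succ_mem _ _ _ (Finset.mem_coe.2 hxR)]
          have := step_lin q T 0 (ev q (box R) (inb R) T) (ev q (box R) (inb R) T) x ρ
          simp only [zero_mul, add_zero] at this
          rw [← this]
          refine step_mono h0 h1 fun b σ => ih _ _ ?_
          have := hx'.2
          unfold nm at this ⊢
          cases b <;> cases σ <;> simp [dir] <;> omega
        have hev : step q (fun x _ => 2 * (R : ℝ) ^ 2 - (x.1 : ℝ) ^ 2 - (x.2 : ℝ) ^ 2) x ρ
            = 2 * (R : ℝ) ^ 2 - (x.1 : ℝ) ^ 2 - (x.2 : ℝ) ^ 2 - 1 := by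
          rw [step_eq]; cases ρ x <;> simp [pr] <;> ring
        push_cast
        linarith
      · rw [ev_notMem (D := (box R : Set Z2)) q _ _ (by simpa using hxR)]
        simpa [inb, hxR] using hnn x hx
  by_cases hx : nm x ≤ R
  · have := key T x ρ hx
    nlinarith [sq_nonneg (x.1 : ℝ), sq_nonneg (x.2 : ℝ)]
  · have hxR : x ∉ box R := fun h => hx (mem_box.1 h).2.le
    rw [ev_notMem (D := (box R : Set Z2)) q _ _ (by simpa using hxR)]
    simp [inb, hxR]

lemma abs_fld_le (R : ℕ) (ρ : Config) : |fld R ρ| ≤ ∑ y ∈ box R, |dpot y| := by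
  refine (Finset.abs_sum_le_sum_abs _ _).trans (Finset.sum_le_sum fun y _ => ?_)
  rw [abs_mul, abs_sg, one_mul]

lemma fld_sub_le (R : ℕ) (ρ ρ₀ : Config) :
    |fld R ρ - fld R ρ₀| ≤ 2 * ∑ y ∈ box R, |dpot y| * chg y ρ₀ 0 ρ := by
  unfold fld
  rw [← Finset.sum_sub_distrib, Finset.mul_sum]
  refine (Finset.abs_sum_le_sum_abs _ _).trans (Finset.sum_le_sum fun y _ => ?_)
  rw [← sub_mul, abs_mul]
  unfold chg
  by_cases h : ρ y = ρ₀ y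
  · simp [h]
  · rw [if_pos ⟨rfl, h⟩]
    have : |sg (ρ y) - sg (ρ₀ y)| ≤ 2 := by
      have := abs_sub (sg (ρ y)) (sg (ρ₀ y))
      rw [abs_sg, abs_sg] at this; linarith
    nlinarith [abs_nonneg (dpot y)]

/-- The value of the supermartingale, restricted to the event of having reached distance `R`. -/
noncomputable def xp (q : ℝ) (R : ℕ) (x : Z2) (ρ : Config) : ℝ := ex R x ρ * spm q R x ρ

/-- Optional stopping for the supermartingale started from `(x₀, ρ₀)`. When the walk is back at
the origin, the field has changed only at sites which were visited, and these are controlled by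
the probabilities to reach smaller distances. -/
lemma ev_xp_le {q : ℝ} (h0 : 0 < q) (h1 : q ≤ 1) (R : ℕ) (T : ℕ) (x₀ : Z2)
    (ρ₀ : Config) :
    ev q (box R) (xp q R) T x₀ ρ₀ ≤ spm q R x₀ ρ₀ + |pot 0| + |cc q| * |fld R ρ₀|
      + 2 * |cc q| * ∑ y ∈ box R, |dpot y| * (ep q (nm y) T x₀ ρ₀ - ep q R T x₀ ρ₀)
      + (1 + |cc q| * ∑ y ∈ box R, |dpot y|) * ev q (box R) (inb R) T x₀ ρ₀ := by
  set B := ∑ y ∈ box R, |dpot y| with hB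
  obtain ⟨A, hA⟩ : ∃ A, A = |pot 0| + |cc q| * |fld R ρ₀| := ⟨_, rfl⟩
  have hA0 : 0 ≤ A := by rw [hA]; positivity
  have hB0 : 0 ≤ B := Finset.sum_nonneg fun _ _ => abs_nonneg _
  have hsup := ev_super h0.le h1 (D := (box R : Set Z2)) (F := spm q R)
    (fun x hx ρ => spm_super h0 (Finset.mem_coe.1 hx) ρ) T x₀ ρ₀
  have hpt : ∀ x ρ, xp q R x ρ ≤ spm q R x ρ + (A + (2 * |cc q| *
      ∑ y ∈ box R, |dpot y| * chg y ρ₀ x ρ + (1 + |cc q| * B) * inb R x ρ)) := by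
    intro x ρ
    have hs : 0 ≤ 2 * |cc q| * ∑ y ∈ box R, |dpot y| * chg y ρ₀ x ρ :=
      mul_nonneg (by positivity) (Finset.sum_nonneg fun y _ =>
        mul_nonneg (abs_nonneg _) (chg_nonneg _ _ _ _))
    have hi : 0 ≤ (1 + |cc q| * B) * inb R x ρ := by
      refine mul_nonneg (by positivity) ?_
      unfold inb; split_ifs <;> norm_num
    by_cases hx : R ≤ nm x
    · simp only [xp, ex, hx, if_true, one_mul]
      linarith
    · simp only [xp, ex, hx, if_false, zero_mul]
      by_cases hx0 : x = 0
      · subst hx0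
        have := fld_sub_le R ρ ρ₀
        have e1 : -(|cc q| * |fld R ρ - fld R ρ₀|) ≤ cc q * (fld R ρ - fld R ρ₀) := by
          rw [← abs_mul]; exact neg_abs_le _
        have e2 : -(|cc q| * |fld R ρ₀|) ≤ cc q * fld R ρ₀ := by
          rw [← abs_mul]; exact neg_abs_le _
        have e3 := neg_abs_le (pot 0)
        have e4 := mul_le_mul_of_nonneg_left this (abs_nonneg (cc q))
        unfold spm
        linarith
      · have hxR : x ∈ box R := mem_box.2 ⟨hx0, by omega⟩
        have hi' : inb R x ρ = 1 := by simp [inb, hxR]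
        have e2 : -(|cc q| * |fld R ρ|) ≤ cc q * fld R ρ := by
          rw [← abs_mul]; exact neg_abs_le _
        have e4 := mul_le_mul_of_nonneg_left (abs_fld_le R ρ) (abs_nonneg (cc q))
        have := pot_ge_neg_one hx0
        rw [hi']
        unfold spm
        linarith
  have h2 := ev_mono h0.le h1 (D := (box R : Set Z2)) hpt T x₀ ρ₀
  rw [ev_add, ev_add, ev_add, ev_smul, ev_smul, ev_const, ev_sum] at h2
  have h3 : ∑ y ∈ box R, |dpot y| * ev q (box R) (chg y ρ₀) T x₀ ρ₀
      ≤ ∑ y ∈ box R, |dpot y| * (ep q (nm y) T x₀ ρ₀ - ep q R T x₀ ρ₀) := by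
    refine Finset.sum_le_sum fun y hy => mul_le_mul_of_nonneg_left ?_ (abs_nonneg _)
    have hy' := mem_box.1 hy
    have h1y : 1 ≤ nm y := one_le_nm hy'.1
    have := ev_chg_le h0.le h1 h1y hy'.2.le ρ₀ T x₀ ρ₀ rfl
    rw [ev_add] at this
    unfold ep
    linarith
  have h4 := mul_le_mul_of_nonneg_left h3 (show 0 ≤ 2 * |cc q| by positivity)
  linarith

lemma nice_ex (R : ℕ) : Nice (ex R) := fun _ => continuous_const

lemma nice_inb (R : ℕ) : Nice (inb R) := fun _ => continuous_const

lemma nice_spm (q : ℝ) (R : ℕ) : Nice (spm q R) := fun _ =>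
  continuous_const.add (continuous_const.mul (continuous_fld R))

lemma nice_xp (q : ℝ) (R : ℕ) : Nice (xp q R) := fun x =>
  (nice_ex R x).mul (nice_spm q R x)

lemma nice_ep (q : ℝ) (R T : ℕ) : Nice (ep q R T) := (nice_ex R).ev q _ T

/-- The averaged probability of reaching distance `R` before the origin, within time `T`. -/
noncomputable def aep (ν : Measure Config) (q : ℝ) (x : Z2) (R T : ℕ) : ℝ :=
  ∫ ρ, ep q R T x ρ ∂ν

/-- The averaged form of optional stopping for the compensated potential, with the sites of the
square grouped by their norm. -/
lemma integral_xp_le {ν : Measure Config} [IsProbabilityMeasure ν] (hν : IsIUD ν)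
    {q : ℝ} (h0 : 0 < q) (h1 : q ≤ 1) (R : ℕ) {T : ℕ} (hT : 1 ≤ T) (x₀ : Z2) :
    ∫ ρ, ev q (box R) (xp q R) T x₀ ρ ∂ν ≤ pot x₀ + |pot 0| + |cc q| * ∫ ρ, |fld R ρ| ∂ν
      + 2 * |cc q| * ∑ k ∈ Finset.Ico 1 R, dl k * (aep ν q x₀ k T - aep ν q x₀ R T)
      + (1 + |cc q| * ∑ y ∈ box R, |dpot y|) * (2 * (R : ℝ) ^ 2 / T) := by
  have i1 : Integrable (fun ρ => spm q R x₀ ρ) ν := integrable_of_cont (nice_spm q R x₀)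
  have i2 : Integrable (fun ρ => |cc q| * |fld R ρ|) ν :=
    integrable_of_cont (continuous_const.mul (continuous_fld R).abs)
  have c3 : ∀ y, Continuous fun ρ => |dpot y| * (ep q (nm y) T x₀ ρ - ep q R T x₀ ρ) := fun y =>
    continuous_const.mul ((nice_ep q (nm y) T x₀).sub (nice_ep q R T x₀))
  have i3 : Integrable (fun ρ => 2 * |cc q| *
      ∑ y ∈ box R, |dpot y| * (ep q (nm y) T x₀ ρ - ep q R T x₀ ρ)) ν :=
    integrable_of_cont (continuous_const.mul (continuous_finsetSum _ fun y _ => c3 y))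
  set K := (1 + |cc q| * ∑ y ∈ box R, |dpot y|) * (2 * (R : ℝ) ^ 2 / T) with hK
  have hB0 : 0 ≤ ∑ y ∈ box R, |dpot y| := Finset.sum_nonneg fun _ _ => abs_nonneg _
  have hT' : (0 : ℝ) < T := by exact_mod_cast hT
  have hpt : ∀ ρ, ev q (box R) (xp q R) T x₀ ρ ≤ spm q R x₀ ρ + |pot 0| + |cc q| * |fld R ρ|
      + 2 * |cc q| * (∑ y ∈ box R, |dpot y| * (ep q (nm y) T x₀ ρ - ep q R T x₀ ρ)) + K := by
    intro ρ
    have h2 := ev_xp_le h0 h1 R T x₀ ρ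
    have h3 : ev q (box R) (inb R) T x₀ ρ ≤ 2 * (R : ℝ) ^ 2 / T := by
      rw [le_div_iff₀ hT', mul_comm]; exact ev_inb_le h0.le h1 R T x₀ ρ
    have h4 := mul_le_mul_of_nonneg_left h3
      (show 0 ≤ 1 + |cc q| * ∑ y ∈ box R, |dpot y| by positivity)
    linarith
  refine (integral_mono (integrable_of_cont ((nice_xp q R).ev q _ T x₀))
    ((((i1.add (integrable_const _)).add i2).add i3).add (integrable_const _)) hpt).trans ?_
  rw [integral_add' (((i1.add (integrable_const _)).add i2).add i3) (integrable_const _),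
    integral_add' ((i1.add (integrable_const _)).add i2) i3,
    integral_add' (i1.add (integrable_const _)) i2, integral_add' i1 (integrable_const _),
    integral_const_mul, integral_const_mul, integral_finsetSum _ fun y _ => integrable_of_cont (c3 y)]
  have e1 : ∫ ρ, spm q R x₀ ρ ∂ν = pot x₀ := by
    unfold spm
    have hc : Continuous fun ρ => cc q * fld R ρ := continuous_const.mul (continuous_fld R)
    rw [integral_add (integrable_const _) (integrable_of_cont hc), integral_const_mul,
      hν.integral_fld]
    simp
  have e2 : ∀ y, ∫ ρ, |dpot y| * (ep q (nm y) T x₀ ρ - ep q R T x₀ ρ) ∂ν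
      = |dpot y| * (aep ν q x₀ (nm y) T - aep ν q x₀ R T) := by
    intro y
    rw [integral_const_mul, integral_sub (integrable_of_cont (nice_ep q (nm y) T x₀))
      (integrable_of_cont (nice_ep q R T x₀))]
    rfl
  have e3 : ∑ y ∈ box R, |dpot y| * (aep ν q x₀ (nm y) T - aep ν q x₀ R T)
      = ∑ k ∈ Finset.Ico 1 R, dl k * (aep ν q x₀ k T - aep ν q x₀ R T) := by
    rw [sum_box]
    refine Finset.sum_congr rfl fun k _ => ?_
    rw [dl, Finset.sum_mul]
    exact Finset.sum_congr rfl fun y hy => by rw [mem_shell.1 hy]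
  simp only [e1, e2, e3]
  simp [hK]

end HV


namespace HV

/-! ### Rotor-like dynamics: wrong labels remain inside small squares -/

/-- The square of side two with lower left corner `a`. -/
def bx (a : Z2) : Finset Z2 :=
  {a, a + (1, 0), a + (0, 1), a + (1, 1)}

lemma mem_bx {a y : Z2} : y ∈ bx a ↔ (y.1 = a.1 ∨ y.1 = a.1 + 1) ∧ (y.2 = a.2 ∨ y.2 = a.2 + 1) := by
  simp only [bx, Finset.mem_insert, Finset.mem_singleton, Prod.ext_iff, Prod.fst_add,
    Prod.snd_add, add_zero]
  omega

/-- The indicator that all labels on `B` are vertical. -/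
def rt (B : Finset Z2) (ρ : Config) : ℝ := ∏ y ∈ B, if ρ y then 0 else 1

lemma rt_zero {B : Finset Z2} {ρ : Config} (h : ∃ y ∈ B, ρ y = true) : rt B ρ = 0 := by
  obtain ⟨y, hy, h⟩ := h
  exact Finset.prod_eq_zero hy (by simp [h])

lemma rt_one {B : Finset Z2} {ρ : Config} (h : ¬∃ y ∈ B, ρ y = true) : rt B ρ = 1 := by
  push Not at h
  exact Finset.prod_eq_one fun y hy => by simp [h y hy]

lemma rt_nonneg (B : Finset Z2) (ρ : Config) : 0 ≤ rt B ρ := by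
  by_cases h : ∃ y ∈ B, ρ y = true
  · rw [rt_zero h]
  · rw [rt_one h]; norm_num

lemma rt_le_one (B : Finset Z2) (ρ : Config) : rt B ρ ≤ 1 := by
  by_cases h : ∃ y ∈ B, ρ y = true
  · rw [rt_zero h]; norm_num
  · rw [rt_one h]

lemma continuous_rt (B : Finset Z2) : Continuous (rt B) :=
  continuous_finsetProd _ fun y _ => continuous_label (fun b => if b then 0 else 1) y

/-- The walk has left the square of radius `R`, and all labels on `B` are vertical. -/
noncomputable def fr (R : ℕ) (B : Finset Z2) (x : Z2) (ρ : Config) : ℝ := ex R x ρ * rt B ρ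

/-- The walk has left the square of radius `R`, and some label on `B` is horizontal. -/
noncomputable def fw (R : ℕ) (B : Finset Z2) (x : Z2) (ρ : Config) : ℝ := ex R x ρ * (1 - rt B ρ)

lemma fr_nonneg (R : ℕ) (B : Finset Z2) (x : Z2) (ρ : Config) : 0 ≤ fr R B x ρ :=
  mul_nonneg (ex_nonneg _ _ _) (rt_nonneg _ _)

lemma fw_nonneg (R : ℕ) (B : Finset Z2) (x : Z2) (ρ : Config) : 0 ≤ fw R B x ρ :=
  mul_nonneg (ex_nonneg _ _ _) (by linarith [rt_le_one B ρ])

lemma nice_fr (R : ℕ) (B : Finset Z2) : Nice (fr R B) := fun x =>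
  (nice_ex R x).mul (continuous_rt B)

lemma nice_fw (R : ℕ) (B : Finset Z2) : Nice (fw R B) := fun x =>
  (nice_ex R x).mul (continuous_const.sub (continuous_rt B))

lemma ex_of_mem {R : ℕ} {x : Z2} (hx : x ∈ box R) (ρ : Config) : ex R x ρ = 0 := by
  have := (mem_box.1 hx).2
  simp [ex]; omega

/-- While it avoids `B`, the walk behaves identically in two configurations agreeing off `B`, so
exits leaving all labels on `B` vertical from `ρ₁` are matched by exits with a horizontal label on
`B` from `ρ₂`. -/
lemma avoid_le {R : ℕ} {B : Finset Z2} (T : ℕ) (x : Z2) (ρ₁ ρ₂ : Config)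
    (h : ∀ y ∉ B, ρ₁ y = ρ₂ y) (hB : ∃ y ∈ B, ρ₂ y = true) :
    ev 1 (box R \ B : Finset Z2) (fr R B) T x ρ₁ ≤ ev 1 (box R \ B : Finset Z2) (fw R B) T x ρ₂ := by
  have hf : ∀ x (ρ₁ ρ₂ : Config), (∃ y ∈ B, ρ₂ y = true) → fr R B x ρ₁ ≤ fw R B x ρ₂ := by
    intro x ρ₁ ρ₂ hB
    unfold fr fw
    rw [rt_zero hB]
    exact mul_le_mul_of_nonneg_left (by linarith [rt_le_one B ρ₁]) (ex_nonneg R x ρ₁)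
  induction T generalizing x ρ₁ ρ₂ with
  | zero => exact hf x _ _ hB
  | succ T ih =>
    by_cases hx : x ∈ box R \ B
    · have hxB := (Finset.mem_sdiff.1 hx).2
      rw [ev_succ_mem _ _ _ (Finset.mem_coe.2 hx), ev_succ_mem _ _ _ (Finset.mem_coe.2 hx)]
      unfold step
      rw [h x hxB]
      refine Finset.sum_le_sum fun b _ => Finset.sum_le_sum fun σ _ => ?_
      have hpr := pr_nonneg (q := 1) (by norm_num) (by norm_num) (ρ₂ x) b
      have hag : ∀ y ∉ B, Function.update ρ₁ x b y = Function.update ρ₂ x b y := by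
        intro y hy
        by_cases hyx : y = x
        · subst hyx; simp
        · rw [Function.update_of_ne hyx, Function.update_of_ne hyx, h y hy]
      have hex : ∃ y ∈ B, Function.update ρ₂ x b y = true := by
        obtain ⟨y, hy, hy2⟩ := hB
        refine ⟨y, hy, ?_⟩
        rw [Function.update_of_ne (by rintro rfl; exact hxB hy), hy2]
      refine mul_le_mul_of_nonneg_left (ih _ _ _ hag hex) (by positivity)
    · rw [ev_notMem _ _ _ (by simpa using hx), ev_notMem _ _ _ (by simpa using hx)]
      exact hf x _ _ hB

lemma avoid_zero {R : ℕ} {B : Finset Z2} (T : ℕ) (x : Z2) (ρ : Config)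
    (hB : ∃ y ∈ B, ρ y = true) :
    ev 1 (box R \ B : Finset Z2) (fr R B) T x ρ = 0 := by
  induction T generalizing x ρ with
  | zero => rw [ev_zero, fr, rt_zero hB, mul_zero]
  | succ T ih =>
    by_cases hx : x ∈ box R \ B
    · have hxB := (Finset.mem_sdiff.1 hx).2
      rw [ev_succ_mem _ _ _ (Finset.mem_coe.2 hx)]
      unfold step
      refine Finset.sum_eq_zero fun b _ => Finset.sum_eq_zero fun σ _ => ?_
      rw [ih, mul_zero]
      obtain ⟨y, hy, hy2⟩ := hB
      refine ⟨y, hy, ?_⟩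
      rw [Function.update_of_ne (by rintro rfl; exact hxB hy), hy2]
    · rw [ev_notMem _ _ _ (by simpa using hx), fr, rt_zero hB, mul_zero]

/-- One step of the walk (with `q = 1`), killed when leaving the punctured square. -/
noncomputable def Qo (R : ℕ) (F : Z2 → Config → ℝ) (x : Z2) (ρ : Config) : ℝ :=
  if x ∈ box R then step 1 F x ρ else 0

/-- The contribution of the paths from `B` which never come back to `B`. -/
noncomputable def psi (R : ℕ) (B : Finset Z2) (f : Z2 → Config → ℝ) (T : ℕ) (x : Z2)
    (ρ : Config) : ℝ :=
  if x ∈ B then step 1 (ev 1 (box R \ B : Finset Z2) f T) x ρ else 0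

/-- The contribution of the paths visiting `B`. -/
noncomputable def hv (R : ℕ) (B : Finset Z2) (f : Z2 → Config → ℝ) (T : ℕ) (x : Z2)
    (ρ : Config) : ℝ :=
  ev 1 (box R) f T x ρ - ev 1 (box R \ B : Finset Z2) f T x ρ

lemma hv_zero (R : ℕ) (B : Finset Z2) (f : Z2 → Config → ℝ) (x : Z2) (ρ : Config) :
    hv R B f 0 x ρ = 0 := by simp [hv, ev_zero]

/-- Last-exit decomposition at the visits of `B`. -/
lemma hv_succ {R : ℕ} {B : Finset Z2} (hB : B ⊆ box R) {f : Z2 → Config → ℝ}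
    (hf : ∀ x ∈ box R, ∀ ρ, f x ρ = 0) (T : ℕ) (x : Z2) (ρ : Config) :
    hv R B f (T + 1) x ρ = Qo R (hv R B f T) x ρ + psi R B f T x ρ := by
  have hs : step 1 (hv R B f T) x ρ = step 1 (ev 1 (box R) f T) x ρ
      - step 1 (ev 1 (box R \ B : Finset Z2) f T) x ρ := by
    have := step_lin 1 1 (-1) (ev 1 (box R) f T) (ev 1 (box R \ B : Finset Z2) f T) x ρ
    simp only [one_mul, neg_mul, ← sub_eq_add_neg] at this
    exact this
  unfold Qo psi
  by_cases hx : x ∈ box R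
  · rw [if_pos hx, hs]
    unfold hv
    rw [ev_succ_mem _ _ _ (Finset.mem_coe.2 hx)]
    by_cases hxB : x ∈ B
    · rw [if_pos hxB, ev_notMem (D := ((box R \ B : Finset Z2) : Set Z2)) _ _ _ (by simp [hxB]),
        hf x hx]
      ring
    · rw [if_neg hxB, ev_succ_mem (D := ((box R \ B : Finset Z2) : Set Z2)) _ _ _
        (by simpa using ⟨hx, hxB⟩)]
      ring
  · have hxB : x ∉ B := fun h => hx (hB h)
    rw [if_neg hx, if_neg hxB]
    unfold hv
    rw [ev_notMem (D := (box R : Set Z2)) _ _ _ (by simpa using hx),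
      ev_notMem (D := ((box R \ B : Finset Z2) : Set Z2)) _ _ _ (by simp [hx])]
    ring

lemma Qo_mono (R : ℕ) {F G : Z2 → Config → ℝ} (h : ∀ x ρ, F x ρ ≤ G x ρ) (x : Z2) (ρ : Config) :
    Qo R F x ρ ≤ Qo R G x ρ := by
  unfold Qo
  split_ifs
  · exact step_mono (by norm_num) (by norm_num) fun b σ => h _ _
  · rfl

lemma Qo_lin (R : ℕ) (a b : ℝ) (F G : Z2 → Config → ℝ) (x : Z2) (ρ : Config) :
    Qo R (fun x ρ => a * F x ρ + b * G x ρ) x ρ = a * Qo R F x ρ + b * Qo R G x ρ := by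
  unfold Qo
  split_ifs
  · exact step_lin _ _ _ _ _ _ _
  · ring

lemma Qo_iter_mono (R n : ℕ) {F G : Z2 → Config → ℝ} (h : ∀ x ρ, F x ρ ≤ G x ρ) (x : Z2)
    (ρ : Config) : (Qo R)^[n] F x ρ ≤ (Qo R)^[n] G x ρ := by
  induction n generalizing x ρ with
  | zero => exact h x ρ
  | succ n ih =>
    rw [Function.iterate_succ_apply', Function.iterate_succ_apply']
    exact Qo_mono R ih x ρ

lemma Qo_iter_add (R n : ℕ) (F G : Z2 → Config → ℝ) (x : Z2) (ρ : Config) :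
    (Qo R)^[n] (fun x ρ => F x ρ + G x ρ) x ρ = (Qo R)^[n] F x ρ + (Qo R)^[n] G x ρ := by
  induction n generalizing x ρ with
  | zero => rfl
  | succ n ih =>
    rw [Function.iterate_succ_apply', Function.iterate_succ_apply', Function.iterate_succ_apply']
    have : (Qo R)^[n] (fun x ρ => F x ρ + G x ρ)
        = fun x ρ => 1 * (Qo R)^[n] F x ρ + 1 * (Qo R)^[n] G x ρ := by
      funext x ρ; rw [ih]; ring
    rw [this, Qo_lin]; ring

lemma Qo_zero (R : ℕ) : Qo R (fun _ _ => 0) = fun _ _ => 0 := by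
  funext x ρ
  unfold Qo
  rw [step_const]; simp

lemma Qo_iter_nonneg (R n : ℕ) {F : Z2 → Config → ℝ} (h : ∀ x ρ, 0 ≤ F x ρ) (x : Z2)
    (ρ : Config) : 0 ≤ (Qo R)^[n] F x ρ := by
  have := Qo_iter_mono R n (F := fun _ _ => 0) h x ρ
  rwa [Function.iterate_fixed (Qo_zero R)] at this

/-- With `q = 1`, each of the two neighbours in the direction of the new label is reached with
probability one half. -/
lemma le_two_Qo {R : ℕ} {F : Z2 → Config → ℝ} (h : ∀ x ρ, 0 ≤ F x ρ) {x : Z2} (hx : x ∈ box R)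
    {ρ : Config} {b : Bool} (hb : ρ x = !b) {x' : Z2} (σ : Bool) (hx' : x' = x + dir b σ) :
    F x' (Function.update ρ x b) ≤ 2 * Qo R F x ρ := by
  unfold Qo
  rw [if_pos hx, step]
  have hnn : ∀ b σ, 0 ≤ pr 1 (ρ x) b / 2 * F (x + dir b σ) (Function.update ρ x b) := fun b σ =>
    mul_nonneg (by have := pr_nonneg (q := 1) (by norm_num) (by norm_num) (ρ x) b; positivity)
      (h _ _)
  have h1 : pr 1 (ρ x) b / 2 * F (x + dir b σ) (Function.update ρ x b) ≤
      ∑ σ : Bool, pr 1 (ρ x) b / 2 * F (x + dir b σ) (Function.update ρ x b) :=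
    Finset.single_le_sum (fun σ _ => hnn b σ) (Finset.mem_univ σ)
  have h2 : ∑ σ : Bool, pr 1 (ρ x) b / 2 * F (x + dir b σ) (Function.update ρ x b) ≤
      ∑ b : Bool, ∑ σ : Bool, pr 1 (ρ x) b / 2 * F (x + dir b σ) (Function.update ρ x b) :=
    Finset.single_le_sum (f := fun b => ∑ σ : Bool, pr 1 (ρ x) b / 2 *
      F (x + dir b σ) (Function.update ρ x b))
      (fun b _ => Finset.sum_nonneg fun σ _ => hnn b σ) (Finset.mem_univ b)
  have e : pr 1 (ρ x) b = 1 := by rw [hb]; cases b <;> simp [pr]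
  rw [e, ← hx'] at h1
  rw [e] at h2
  linarith

lemma psi_nonneg {R : ℕ} {B : Finset Z2} {f : Z2 → Config → ℝ} (hf : ∀ x ρ, 0 ≤ f x ρ) (T : ℕ)
    (x : Z2) (ρ : Config) : 0 ≤ psi R B f T x ρ := by
  unfold psi
  split_ifs
  · exact step_nonneg (by norm_num) (by norm_num) fun b σ =>
      ev_nonneg (by norm_num) (by norm_num) hf _ _ _
  · rfl

/-- The loop `z → z₂ → z₃ → z₂ → z → z₁ → z` inside the square (`z₁`, `z₂`, `z₃` being the
horizontal, vertical and diagonal neighbours of `z`) leaves horizontal labels at `z` and `z₁`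
and does not touch the labels outside the four vertices. It has probability `2⁻⁶`. -/
lemma loop {R : ℕ} {F : Z2 → Config → ℝ} (h : ∀ x ρ, 0 ≤ F x ρ) {z z₁ z₂ z₃ : Z2}
    (m : z ∈ box R) (m1 : z₁ ∈ box R) (m2 : z₂ ∈ box R) (m3 : z₃ ∈ box R) {σ τ : Bool}
    (e1 : z₁ = z + dir true σ) (e2 : z₂ = z + dir false τ) (e3 : z₃ = z₂ + dir true σ)
    (e1' : z = z₁ + dir true !σ) (e2' : z = z₂ + dir false !τ) (e3' : z₂ = z₃ + dir true !σ)
    (n1 : z₁ ≠ z) (n2 : z₂ ≠ z) (n3 : z₃ ≠ z) (n12 : z₁ ≠ z₂) (n13 : z₁ ≠ z₃) (n23 : z₂ ≠ z₃)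
    {ρ : Config} (l : ρ z = true) (l1 : ρ z₁ = false) (l2 : ρ z₂ = false) (l3 : ρ z₃ = false) :
    ∃ ρ' : Config, ρ' z = true ∧ ρ' z₁ = true ∧ (∀ y, y ≠ z → y ≠ z₁ → y ≠ z₂ → y ≠ z₃ →
      ρ' y = ρ y) ∧ F z ρ' ≤ 64 * (Qo R)^[6] F z ρ := by
  set r1 := Function.update ρ z false with hr1
  set r2 := Function.update r1 z₂ true with hr2
  set r3 := Function.update r2 z₃ true with hr3
  set r4 := Function.update r3 z₂ false with hr4
  set r5 := Function.update r4 z true with hr5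
  set r6 := Function.update r5 z₁ true with hr6
  have hn := fun n => Qo_iter_nonneg R n h
  have s1 := le_two_Qo (hn 5) m (ρ := ρ) (b := false) (by simp [l]) τ e2
  have s2 := le_two_Qo (hn 4) m2 (ρ := r1) (b := true)
    (by simp [hr1, n2, l2]) σ e3
  have s3 := le_two_Qo (hn 3) m3 (ρ := r2) (b := true)
    (by simp [hr2, hr1, n3, n23.symm, l3]) (!σ) e3'
  have s4 := le_two_Qo (hn 2) m2 (ρ := r3) (b := false)
    (by simp [hr3, hr2, n23]) (!τ) e2'
  have s5 := le_two_Qo (hn 1) m (ρ := r4) (b := true)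
    (by simp [hr4, hr3, hr2, hr1, n2.symm, n3.symm]) σ e1
  have s6 := le_two_Qo (hn 0) m1 (ρ := r5) (b := true)
    (by simp [hr5, hr4, hr3, hr2, hr1, n1, n12, n13, l1]) (!σ) e1'
  refine ⟨r6, ?_, ?_, ?_, ?_⟩
  · simp [hr6, hr5, n1.symm]
  · simp [hr6]
  · intro y h0 h1 h2 h3
    simp [hr6, hr5, hr4, hr3, hr2, hr1, h0, h1, h2, h3]
  · have t1 : (Qo R)^[5] F z₂ r1 ≤ 2 * (Qo R)^[6] F z ρ := by
      rw [Function.iterate_succ_apply' (Qo R) 5]; exact s1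
    have t2 : (Qo R)^[4] F z₃ r2 ≤ 2 * (Qo R)^[5] F z₂ r1 := by
      rw [Function.iterate_succ_apply' (Qo R) 4]; exact s2
    have t3 : (Qo R)^[3] F z₂ r3 ≤ 2 * (Qo R)^[4] F z₃ r2 := by
      rw [Function.iterate_succ_apply' (Qo R) 3]; exact s3
    have t4 : (Qo R)^[2] F z r4 ≤ 2 * (Qo R)^[3] F z₂ r3 := by
      rw [Function.iterate_succ_apply' (Qo R) 2]; exact s4
    have t5 : (Qo R)^[1] F z₁ r5 ≤ 2 * (Qo R)^[2] F z r4 := by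
      rw [Function.iterate_succ_apply' (Qo R) 1]; exact s5
    have t6 : F z r6 ≤ 2 * (Qo R)^[1] F z₁ r5 := s6
    linarith

/-- An exit after the current visit to the small square which leaves its four labels vertical is
dominated, up to a factor `64`, by exits leaving a horizontal label there, through the detour of
`loop`. -/
lemma psi_le {R : ℕ} {a : Z2} (hB : bx a ⊆ box R) (T : ℕ) (x : Z2) (ρ : Config) :
    psi R (bx a) (fr R (bx a)) T x ρ ≤ 64 * (Qo R)^[6] (psi R (bx a) (fw R (bx a)) T) x ρ := by
  have hnn : 0 ≤ 64 * (Qo R)^[6] (psi R (bx a) (fw R (bx a)) T) x ρ :=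
    mul_nonneg (by norm_num) (Qo_iter_nonneg R 6 (psi_nonneg (fw_nonneg R _) T) x ρ)
  by_cases hx : x ∈ bx a
  swap
  · rw [psi, if_neg hx]; exact hnn
  by_cases hH : ρ x = true
  swap
  · refine le_trans (le_of_eq ?_) hnn
    rw [psi, if_pos hx, step_eq]
    rw [Bool.not_eq_true] at hH
    rw [avoid_zero _ _ _ ⟨x, hx, by simp⟩, avoid_zero _ _ _ ⟨x, hx, by simp⟩, hH]
    simp [pr]
  by_cases hO : ∃ y ∈ bx a, y ≠ x ∧ ρ y = true
  · refine le_trans (le_of_eq ?_) hnn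
    obtain ⟨y, hy, hyx, hyt⟩ := hO
    rw [psi, if_pos hx, step]
    refine Finset.sum_eq_zero fun b _ => Finset.sum_eq_zero fun σ _ => ?_
    rw [avoid_zero _ _ _ ⟨y, hy, by rw [Function.update_of_ne hyx, hyt]⟩, mul_zero]
  push Not at hO
  have hO' : ∀ y ∈ bx a, y ≠ x → ρ y = false := fun y hy hyx => by
    simpa using hO y hy hyx
  obtain ⟨i, j⟩ := a
  obtain ⟨u, v⟩ := x
  have hx' := mem_bx.1 hx
  simp only at hx'
  have k1 : ((2 * i + 1 - u, v) : Z2) ∈ bx (i, j) := by rw [mem_bx]; simp only; omega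
  have k2 : ((u, 2 * j + 1 - v) : Z2) ∈ bx (i, j) := by rw [mem_bx]; simp only; omega
  have k3 : ((2 * i + 1 - u, 2 * j + 1 - v) : Z2) ∈ bx (i, j) := by rw [mem_bx]; simp only; omega
  have n1 : ((2 * i + 1 - u, v) : Z2) ≠ (u, v) := by simp [Prod.ext_iff]; omega
  have n2 : ((u, 2 * j + 1 - v) : Z2) ≠ (u, v) := by simp [Prod.ext_iff]; omega
  have n3 : ((2 * i + 1 - u, 2 * j + 1 - v) : Z2) ≠ (u, v) := by simp [Prod.ext_iff]; omega
  obtain ⟨ρ', c1, c2, c3, c4⟩ := loop (F := psi R (bx (i, j)) (fw R (bx (i, j))) T)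
    (psi_nonneg (fw_nonneg R _) T) (hB hx) (hB k1) (hB k2) (hB k3)
    (σ := decide (u = i)) (τ := decide (v = j))
    (by rcases hx'.1 with h | h <;> simp [dir, h, Prod.ext_iff] <;> omega)
    (by rcases hx'.2 with h | h <;> simp [dir, h, Prod.ext_iff] <;> omega)
    (by rcases hx'.1 with h | h <;> simp [dir, h, Prod.ext_iff] <;> omega)
    (by rcases hx'.1 with h | h <;> simp [dir, h, Prod.ext_iff] <;> omega)
    (by rcases hx'.2 with h | h <;> simp [dir, h, Prod.ext_iff] <;> omega)
    (by rcases hx'.1 with h | h <;> simp [dir, h, Prod.ext_iff] <;> omega)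
    n1 n2 n3 (by simp [Prod.ext_iff]; omega) (by simp [Prod.ext_iff]; omega)
    (by simp [Prod.ext_iff]; omega) hH (hO' _ k1 n1) (hO' _ k2 n2) (hO' _ k3 n3)
  refine le_trans ?_ c4
  rw [psi, psi, if_pos hx, if_pos hx, step, step, hH, c1]
  refine Finset.sum_le_sum fun b _ => Finset.sum_le_sum fun σ _ => ?_
  have hpr := pr_nonneg (q := 1) (by norm_num) (by norm_num) true b
  refine mul_le_mul_of_nonneg_left (avoid_le _ _ _ _ ?_ ?_) (by positivity)
  · intro y hy
    have hyx : y ≠ (u, v) := by rintro rfl; exact hy hx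
    rw [Function.update_of_ne hyx, Function.update_of_ne hyx]
    refine (c3 y hyx ?_ ?_ ?_).symm
    · rintro rfl; exact hy k1
    · rintro rfl; exact hy k2
    · rintro rfl; exact hy k3
  · exact ⟨_, k1, by rw [Function.update_of_ne n1, c2]⟩

/-- The bound of `psi_le` summed over the visits to the small square. -/
lemma hv_le {R : ℕ} {a : Z2} (hB : bx a ⊆ box R) (T : ℕ) (x : Z2) (ρ : Config) :
    hv R (bx a) (fr R (bx a)) T x ρ ≤ 64 * (Qo R)^[6] (hv R (bx a) (fw R (bx a)) T) x ρ := by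
  have zr : ∀ x ∈ box R, ∀ ρ, fr R (bx a) x ρ = 0 := fun x hx ρ => by
    rw [fr, ex_of_mem hx, zero_mul]
  have zw : ∀ x ∈ box R, ∀ ρ, fw R (bx a) x ρ = 0 := fun x hx ρ => by
    rw [fw, ex_of_mem hx, zero_mul]
  induction T generalizing x ρ with
  | zero =>
    rw [hv_zero, show hv R (bx a) (fw R (bx a)) 0 = fun _ _ => 0 from
      funext fun x => funext fun ρ => hv_zero _ _ _ _ _, Function.iterate_fixed (Qo_zero R)]
    simp
  | succ T ih =>
    rw [hv_succ hB zr, show hv R (bx a) (fw R (bx a)) (T + 1) = fun x ρ =>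
      Qo R (hv R (bx a) (fw R (bx a)) T) x ρ + psi R (bx a) (fw R (bx a)) T x ρ from
      funext fun x => funext fun ρ => hv_succ hB zw _ _ _, Qo_iter_add]
    have h1 := psi_le hB T x ρ
    have h2 := Qo_mono R ih x ρ
    have h3 := Qo_lin R 64 0 ((Qo R)^[6] (hv R (bx a) (fw R (bx a)) T))
      ((Qo R)^[6] (hv R (bx a) (fw R (bx a)) T)) x ρ
    simp only [zero_mul, add_zero] at h3
    rw [h3, ← Function.iterate_succ_apply' (Qo R), Function.iterate_succ_apply] at h2
    linarith

lemma Qo_iter_hv_le {R : ℕ} {B : Finset Z2} (hB : B ⊆ box R) (T n : ℕ) (x : Z2) (ρ : Config) :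
    (Qo R)^[n] (hv R B (fw R B) T) x ρ ≤ hv R B (fw R B) (T + n) x ρ := by
  have zw : ∀ x ∈ box R, ∀ ρ, fw R B x ρ = 0 := fun x hx ρ => by
    rw [fw, ex_of_mem hx, zero_mul]
  induction n generalizing x ρ with
  | zero => rfl
  | succ n ih =>
    rw [Function.iterate_succ_apply', ← add_assoc, hv_succ hB zw]
    have := Qo_mono R ih x ρ
    linarith [psi_nonneg (R := R) (B := B) (fw_nonneg R B) (T + n) x ρ]

lemma f_mono {R : ℕ} {f : Z2 → Config → ℝ} (hf : ∀ x ρ, 0 ≤ f x ρ)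
    (hz : ∀ x ∈ box R, ∀ ρ, f x ρ = 0) {D : Finset Z2} (hD : D ⊆ box R) (x : Z2) (ρ : Config) :
    Monotone fun T => ev 1 D f T x ρ :=
  ev_monotone (by norm_num) (by norm_num) (fun x hx ρ => by
    rw [hz x (hD (Finset.mem_coe.1 hx))]
    exact step_nonneg (by norm_num) (by norm_num) fun b σ => hf _ _) x ρ

/-- Conditionally on reaching distance `R`, some label on a given `2 × 2` square is horizontal
with probability bounded below. -/
lemma aep_le {ν : Measure Config} [IsProbabilityMeasure ν] (hν : IsIUD ν) {R : ℕ} {a : Z2}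
    (hB : bx a ⊆ box R) (T : ℕ) (x₀ : Z2) :
    aep ν 1 x₀ R T ≤ 65 * ∫ ρ, ev 1 (box R) (fw R (bx a)) (T + 6) x₀ ρ ∂ν := by
  set B := bx a with hBdef
  have zw : ∀ x ∈ box R, ∀ ρ, fw R B x ρ = 0 := fun x hx ρ => by
    rw [fw, ex_of_mem hx, zero_mul]
  have hz : a ∈ B := by rw [hBdef, mem_bx]; simp
  have iE : ∀ T, Integrable (fun ρ => ev 1 (box R) (fw R B) T x₀ ρ) ν := fun T =>
    integrable_of_cont ((nice_fw R B).ev 1 _ T x₀)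
  have iN : ∀ T, Integrable (fun ρ => ev 1 (box R \ B : Finset Z2) (fw R B) T x₀ ρ) ν := fun T =>
    integrable_of_cont ((nice_fw R B).ev 1 _ T x₀)
  have iNr : Integrable (fun ρ => ev 1 (box R \ B : Finset Z2) (fr R B) T x₀ ρ) ν :=
    integrable_of_cont ((nice_fr R B).ev 1 _ T x₀)
  have hflip : ∫ ρ, ev 1 (box R \ B : Finset Z2) (fr R B) T x₀ ρ ∂ν
      ≤ ∫ ρ, ev 1 (box R \ B : Finset Z2) (fw R B) T x₀ ρ ∂ν := by
    rw [← hν.integral_flip {a} ((nice_fw R B).ev 1 _ T x₀)]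
    refine integral_mono iNr (integrable_of_cont
      (((nice_fw R B).ev 1 _ T x₀).comp (continuous_flip {a}))) fun ρ => ?_
    by_cases h : ∃ y ∈ B, ρ y = true
    · simp only
      rw [avoid_zero _ _ _ h]
      exact ev_nonneg (by norm_num) (by norm_num) (fw_nonneg R B) _ _ _
    · refine avoid_le _ _ _ _ (fun y hy => ?_) ⟨a, hz, ?_⟩
      · have : y ≠ a := by rintro rfl; exact hy hz
        simp [flip, this]
      · push Not at h
        simpa [flip] using h a hz
  have hpt : ∀ ρ, ep 1 R T x₀ ρ ≤ 65 * ev 1 (box R) (fw R B) (T + 6) x₀ ρ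
      + (ev 1 (box R \ B : Finset Z2) (fr R B) T x₀ ρ
        - ev 1 (box R \ B : Finset Z2) (fw R B) T x₀ ρ) := by
    intro ρ
    have e : ep 1 R T x₀ ρ = ev 1 (box R) (fr R B) T x₀ ρ + ev 1 (box R) (fw R B) T x₀ ρ := by
      rw [← ev_add, ep]
      congr 1
      funext x ρ
      unfold fr fw; ring
    have h1 := hv_le hB T x₀ ρ
    have h2 := Qo_iter_hv_le hB T 6 x₀ ρ
    have h3 := f_mono (fw_nonneg R B) zw (Finset.Subset.refl _) x₀ ρ (show T ≤ T + 6 by omega)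
    have h4 := f_mono (fw_nonneg R B) zw (D := box R \ B) Finset.sdiff_subset x₀ ρ
      (show T ≤ T + 6 by omega)
    have h5 : 0 ≤ ev 1 (box R \ B : Finset Z2) (fw R B) T x₀ ρ :=
      ev_nonneg (by norm_num) (by norm_num) (fw_nonneg R B) _ _ _
    simp only at h3 h4
    have e1 : hv R B (fr R B) T x₀ ρ = ev 1 (box R) (fr R B) T x₀ ρ -
      ev 1 (box R \ B : Finset Z2) (fr R B) T x₀ ρ := rfl
    have e2 : hv R B (fw R B) (T + 6) x₀ ρ = ev 1 (box R) (fw R B) (T + 6) x₀ ρ -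
      ev 1 (box R \ B : Finset Z2) (fw R B) (T + 6) x₀ ρ := rfl
    rw [e1] at h1
    rw [e2] at h2
    linarith
  have hint := integral_mono (μ := ν) (integrable_of_cont (nice_ep 1 R T x₀))
    (((iE (T + 6)).const_mul 65).add (iNr.sub (iN T))) hpt
  rw [integral_add' ((iE (T + 6)).const_mul 65) (iNr.sub (iN T)), integral_sub' iNr (iN T),
    integral_const_mul] at hint
  unfold aep
  linarith

end HV


namespace HV

/-! ### Lower bound for the supermartingale at the exit time -/

lemma aep_nonneg (ν : Measure Config) {q : ℝ} (h0 : 0 ≤ q) (h1 : q ≤ 1) (x : Z2) (R T : ℕ) :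
    0 ≤ aep ν q x R T :=
  integral_nonneg fun ρ => ev_nonneg h0 h1 (ex_nonneg R) T x ρ

lemma aep_le_one (ν : Measure Config) [IsProbabilityMeasure ν] {q : ℝ} (h0 : 0 ≤ q) (h1 : q ≤ 1)
    (x : Z2) (R T : ℕ) : aep ν q x R T ≤ 1 := by
  have := integral_mono (μ := ν) (integrable_of_cont (nice_ep q R T x)) (integrable_const (1 : ℝ))
    (fun ρ => ev_le_one h0 h1 (ex_le_one R) T x ρ)
  simpa [aep] using this

lemma aep_mono (ν : Measure Config) [IsProbabilityMeasure ν] {q : ℝ} (h0 : 0 ≤ q) (h1 : q ≤ 1)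
    (x : Z2) (R : ℕ) : Monotone fun T => aep ν q x R T := fun _ _ h =>
  integral_mono (integrable_of_cont (nice_ep q R _ x)) (integrable_of_cont (nice_ep q R _ x))
    fun ρ => ep_mono h0 h1 R x ρ h

lemma aep_anti (ν : Measure Config) [IsProbabilityMeasure ν] {q : ℝ} (h0 : 0 ≤ q) (h1 : q ≤ 1)
    (x : Z2) {k R : ℕ} (hk : 1 ≤ k) (hR : k ≤ R) (T : ℕ) : aep ν q x R T ≤ aep ν q x k T :=
  integral_mono (integrable_of_cont (nice_ep q R _ x)) (integrable_of_cont (nice_ep q k _ x))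
    fun ρ => ep_anti h0 h1 hk hR T x ρ

/-- The case `q < 1`: the coefficient `cc q` is smaller than `1 / 2` in absolute value, so the
potential dominates the field deterministically. -/
lemma integral_xp_ge_of_lt {ν : Measure Config} [IsProbabilityMeasure ν]
    {q : ℝ} (hq : 1 / 3 < q) (h1 : q < 1) (x₀ : Z2) :
    ∃ ε C : ℝ, 0 < ε ∧ ∀ R T : ℕ, 2 ≤ R →
      ε * Real.log R * aep ν q x₀ R T - C ≤ ∫ ρ, ev q (box R) (xp q R) (T + 6) x₀ ρ ∂ν := by
  obtain ⟨C, hC, hd⟩ := sum_abs_dpot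
  have hc : |cc q| < 1 / 2 := by
    unfold cc
    rw [abs_lt, lt_div_iff₀ (by linarith), div_lt_iff₀ (by linarith)]
    constructor <;> linarith
  have hc0 := abs_nonneg (cc q)
  refine ⟨2 - 4 * |cc q|, 1 + |cc q| * C, by linarith, fun R T hR => ?_⟩
  have hlog : 0 ≤ Real.log R := Real.log_natCast_nonneg R
  set K := (2 - 4 * |cc q|) * Real.log R with hK
  have hK0 : 0 ≤ K := mul_nonneg (by linarith) hlog
  have hpt : ∀ x ρ, K * ex R x ρ + (-(1 + |cc q| * C)) * 1 ≤ xp q R x ρ := by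
    intro x ρ
    unfold xp ex
    split_ifs with hx
    · have h2 := pot_ge_of_le_nm (by omega) hx
      have h3 : |cc q * fld R ρ| ≤ |cc q| * (4 * Real.log R + C) := by
        rw [abs_mul]
        exact mul_le_mul_of_nonneg_left ((abs_fld_le R ρ).trans (hd R (by omega))) hc0
      have h4 := neg_le_of_abs_le h3
      simp only [spm, one_mul, mul_one]
      rw [hK]
      linarith
    · have : 0 ≤ |cc q| * C := by positivity
      linarith
  have hev : ∀ ρ, K * ep q R T x₀ ρ - (1 + |cc q| * C) ≤ ev q (box R) (xp q R) (T + 6) x₀ ρ := by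
    intro ρ
    have h2 := ev_mono (by linarith) h1.le (D := box R) hpt (T + 6) x₀ ρ
    rw [ev_lin, ev_const] at h2
    have h3 := ep_mono (by linarith) h1.le R x₀ ρ (show T ≤ T + 6 by omega)
    have h4 := mul_le_mul_of_nonneg_left h3 hK0
    simp only [ep] at h4 ⊢
    linarith
  have hint := integral_mono (μ := ν)
    (((integrable_of_cont (nice_ep q R T x₀)).const_mul K).sub (integrable_const _))
    (integrable_of_cont ((nice_xp q R).ev q _ (T + 6) x₀)) hev
  rw [integral_sub' ((integrable_of_cont (nice_ep q R T x₀)).const_mul K) (integrable_const _),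
    integral_const_mul] at hint
  simpa [aep] using hint

/-- Index set of a family of disjoint `2 × 2` squares inside the cone `2 |y₂| ≤ y₁` and
`box R`. -/
def cone (R : ℕ) : Finset (Σ _ : ℕ, ℕ) :=
  (Finset.Ico 1 (R / 2)).sigma fun i => Finset.range (i / 2)

/-- The lower left corner of the square with index `s`. -/
def cor (s : Σ _ : ℕ, ℕ) : Z2 := (2 * (s.1 : ℤ), 2 * (s.2 : ℤ))

lemma mem_cone {R : ℕ} {s : Σ _ : ℕ, ℕ} :
    s ∈ cone R ↔ (1 ≤ s.1 ∧ s.1 < R / 2) ∧ s.2 < s.1 / 2 := by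
  simp [cone]

lemma bx_cor_subset {R : ℕ} {s : Σ _ : ℕ, ℕ} (hs : s ∈ cone R) : bx (cor s) ⊆ box R := by
  intro y hy
  have h1 := mem_cone.1 hs
  have h2 := mem_bx.1 hy
  simp only [cor] at h2
  rw [mem_box]
  refine ⟨?_, ?_⟩
  · intro h
    rw [h] at h2
    simp at h2
    omega
  · simp only [nm]
    omega

lemma cor_disjoint (R : ℕ) :
    (cone R : Set (Σ _ : ℕ, ℕ)).PairwiseDisjoint fun s => bx (cor s) := by
  intro s _ t _ hst
  refine Finset.disjoint_left.2 fun y h1 h2 => hst ?_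
  rw [mem_bx] at h1 h2
  simp only [cor] at h1 h2
  obtain ⟨i, j⟩ := s
  obtain ⟨i', j'⟩ := t
  simp only at h1 h2
  obtain rfl : i = i' := by omega
  obtain rfl : j = j' := by omega
  rfl

/-- In the cone, `dpot` is negative and of order `|y|⁻²`. -/
lemma dpot_cor_le {R : ℕ} {s : Σ _ : ℕ, ℕ} (hs : s ∈ cone R) {y : Z2} (hy : y ∈ bx (cor s)) :
    1 / (32 * (s.1 : ℝ) ^ 2) ≤ -dpot y := by
  have h1 := mem_cone.1 hs
  have h2 := mem_bx.1 hy
  obtain ⟨i, j⟩ := s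
  obtain ⟨k, l⟩ := y
  simp only [cor] at h1 h2 ⊢
  have hk : 2 ≤ k := by omega
  have hl0 : 0 ≤ l := by omega
  have hlk : 2 * l ≤ k := by omega
  have hki : k ≤ 3 * (i : ℤ) := by omega
  have hi : 1 ≤ i := h1.1.1
  refine le_trans ?_ (dpot_bounds hk (by rw [abs_of_nonneg hl0]; omega)).1
  have rk : (2 : ℝ) ≤ k := by exact_mod_cast hk
  have rl0 : (0 : ℝ) ≤ l := by exact_mod_cast hl0
  have rlk : 2 * (l : ℝ) ≤ k := by exact_mod_cast hlk
  have rki : (k : ℝ) ≤ 3 * i := by exact_mod_cast hki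
  have ri : (1 : ℝ) ≤ i := by exact_mod_cast hi
  have hl2 : 4 * (l : ℝ) ^ 2 ≤ (k : ℝ) ^ 2 := by nlinarith
  have hk2 : (k : ℝ) ^ 2 ≤ 9 * (i : ℝ) ^ 2 := by nlinarith
  have hk4 : (4 : ℝ) ≤ (k : ℝ) ^ 2 := by nlinarith
  rw [div_le_div_iff₀ (by positivity) (by positivity), one_mul]
  have a1 : (k : ℝ) ^ 2 + (l : ℝ) ^ 2 + 1 / 2 ≤ 11 / 8 * (k : ℝ) ^ 2 := by linarith
  have a2 : ((k : ℝ) ^ 2 + (l : ℝ) ^ 2 + 1 / 2) ^ 2 ≤ (11 / 8 * (k : ℝ) ^ 2) ^ 2 :=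
    pow_le_pow_left₀ (by positivity) a1 2
  have a3 : 3 / 4 * (k : ℝ) ^ 2 ≤ (k : ℝ) ^ 2 - (l : ℝ) ^ 2 := by linarith
  have a4 : 3 / 4 * (k : ℝ) ^ 2 * (32 * (i : ℝ) ^ 2)
      ≤ ((k : ℝ) ^ 2 - (l : ℝ) ^ 2) * (32 * (i : ℝ) ^ 2) :=
    mul_le_mul_of_nonneg_right a3 (by positivity)
  have a5 : (k : ℝ) ^ 2 * (k : ℝ) ^ 2 ≤ (k : ℝ) ^ 2 * (9 * (i : ℝ) ^ 2) :=
    mul_le_mul_of_nonneg_left hk2 (by positivity)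
  nlinarith

lemma sum_cone_ge {R : ℕ} (hR : 2 ≤ R) :
    1 / 64 * (Real.log R - 4) ≤ ∑ s ∈ cone R, 1 / (32 * (s.1 : ℝ) ^ 2) := by
  have e : ∑ s ∈ cone R, 1 / (32 * (s.1 : ℝ) ^ 2)
      = ∑ i ∈ Finset.Ico 1 (R / 2), ((i / 2 : ℕ) : ℝ) * (1 / (32 * (i : ℝ) ^ 2)) := by
    rw [cone, Finset.sum_sigma]
    simp
  rw [e]
  have h1 : ∑ i ∈ Finset.Ico 1 (R / 2), 1 / 64 * (1 / (i : ℝ) - 1 / (i : ℝ) ^ 2)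
      ≤ ∑ i ∈ Finset.Ico 1 (R / 2), ((i / 2 : ℕ) : ℝ) * (1 / (32 * (i : ℝ) ^ 2)) := by
    refine Finset.sum_le_sum fun i hi => ?_
    have hi1 : 1 ≤ i := (Finset.mem_Ico.1 hi).1
    have ri : (1 : ℝ) ≤ i := by exact_mod_cast hi1
    have h2 : ((i : ℝ) - 1) / 2 ≤ ((i / 2 : ℕ) : ℝ) := by
      have : i ≤ 2 * (i / 2) + 1 := by omega
      have : (i : ℝ) ≤ 2 * ((i / 2 : ℕ) : ℝ) + 1 := by exact_mod_cast this
      linarith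
    refine le_trans (le_of_eq ?_) (mul_le_mul_of_nonneg_right h2 (by positivity))
    field_simp
    ring
  refine le_trans ?_ h1
  rw [← Finset.mul_sum, Finset.sum_sub_distrib]
  have h3 := le_sum_inv (n := R / 2) (by omega)
  have h4 := sum_inv_sq_le (R / 2)
  have h5 : Real.log R - 2 ≤ Real.log ((R / 2 : ℕ) : ℝ) := by
    have h6 : R ≤ 4 * (R / 2) := by omega
    have h7 : (R : ℝ) ≤ 4 * ((R / 2 : ℕ) : ℝ) := by exact_mod_cast h6
    have h8 : (0 : ℝ) < ((R / 2 : ℕ) : ℝ) := by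
      have : 0 < R / 2 := by omega
      exact_mod_cast this
    have h9 : Real.log R ≤ Real.log (4 * ((R / 2 : ℕ) : ℝ)) :=
      Real.log_le_log (by positivity) h7
    rw [Real.log_mul (by norm_num) h8.ne'] at h9
    have h10 : Real.log 4 ≤ 2 := by
      rw [show (4 : ℝ) = 2 ^ 2 by norm_num, Real.log_pow]
      have := Real.log_two_lt_d9
      push_cast
      linarith
    linarith
  linarith

/-- Each square with a wrong label adds to the gap between the field and its extremal value. -/
lemma sum_wrong_le (R : ℕ) (ρ : Config) :
    ∑ s ∈ cone R, 1 / (32 * (s.1 : ℝ) ^ 2) * (1 - rt (bx (cor s)) ρ)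
      ≤ 1 / 2 * (∑ y ∈ box R, |dpot y| - fld R ρ) := by
  set G : Z2 → ℝ := fun y => 1 / 2 * (|dpot y| - sg (ρ y) * dpot y) with hG
  have hG0 : ∀ y, 0 ≤ G y := by
    intro y
    have h : sg (ρ y) * dpot y ≤ |sg (ρ y) * dpot y| := le_abs_self _
    rw [abs_mul, abs_sg, one_mul] at h
    simp only [hG]
    linarith
  have e : 1 / 2 * (∑ y ∈ box R, |dpot y| - fld R ρ) = ∑ y ∈ box R, G y := by
    simp only [hG, fld]
    rw [← Finset.mul_sum, Finset.sum_sub_distrib]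
  rw [e]
  calc ∑ s ∈ cone R, 1 / (32 * (s.1 : ℝ) ^ 2) * (1 - rt (bx (cor s)) ρ)
      ≤ ∑ s ∈ cone R, ∑ y ∈ bx (cor s), G y := by
        refine Finset.sum_le_sum fun s hs => ?_
        by_cases h : ∃ y ∈ bx (cor s), ρ y = true
        · rw [rt_zero h]
          obtain ⟨y, hy, hyt⟩ := h
          have h1 := dpot_cor_le hs hy
          have h2 : G y = -dpot y := by
            have h3 : 0 ≤ 1 / (32 * (s.1 : ℝ) ^ 2) := by positivity
            simp only [hG, hyt, sg, if_true]
            rw [abs_of_nonpos (by linarith)]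
            ring
          have h3 : G y ≤ ∑ y ∈ bx (cor s), G y :=
            Finset.single_le_sum (fun y _ => hG0 y) hy
          linarith
        · rw [rt_one h, sub_self, mul_zero]
          exact Finset.sum_nonneg fun y _ => hG0 y
    _ = ∑ y ∈ (cone R).biUnion fun s => bx (cor s), G y :=
        (Finset.sum_biUnion (cor_disjoint R)).symm
    _ ≤ ∑ y ∈ box R, G y :=
        Finset.sum_le_sum_of_subset_of_nonneg
          (Finset.biUnion_subset.2 fun s hs => bx_cor_subset hs) fun y _ _ => hG0 y

/-- The case `q = 1`: a deterministic comparison is just not sufficient, but a positive proportion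
of the squares contain a wrong label at the exit time. -/
lemma integral_xp_ge_one {ν : Measure Config} [IsProbabilityMeasure ν] (hν : IsIUD ν) (x₀ : Z2) :
    ∃ ε C : ℝ, 0 < ε ∧ ∀ R T : ℕ, 2 ≤ R →
      ε * Real.log R * aep ν 1 x₀ R T - C ≤ ∫ ρ, ev 1 (box R) (xp 1 R) (T + 6) x₀ ρ ∂ν := by
  obtain ⟨C, hC, hd⟩ := sum_abs_dpot
  refine ⟨1 / (64 * 65), 1 + C / 2 + 4 / (64 * 65), by norm_num, fun R T hR => ?_⟩
  have hpt : ∀ x ρ, 1 * (∑ s ∈ cone R, 1 / (32 * (s.1 : ℝ) ^ 2) * fw R (bx (cor s)) x ρ)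
      + (-(1 + C / 2)) * 1 ≤ xp 1 R x ρ := by
    intro x ρ
    simp only [xp, fw, ex]
    split_ifs with hx
    · have h2 := pot_ge_of_le_nm (by omega) hx
      have h3 := sum_wrong_le R ρ
      have h4 := hd R (by omega)
      have h5 : cc 1 = -1 / 2 := by norm_num [cc]
      simp only [spm, one_mul, mul_one, h5]
      linarith
    · simp
      linarith
  have hev : ∀ ρ, ∑ s ∈ cone R, 1 / (32 * (s.1 : ℝ) ^ 2) *
      ev 1 (box R) (fw R (bx (cor s))) (T + 6) x₀ ρ - (1 + C / 2)
      ≤ ev 1 (box R) (xp 1 R) (T + 6) x₀ ρ := by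
    intro ρ
    have h2 := ev_mono (by norm_num) le_rfl (D := box R) hpt (T + 6) x₀ ρ
    rw [ev_lin, ev_const, ev_sum] at h2
    linarith
  have ii : ∀ s ∈ cone R, Integrable (fun ρ => 1 / (32 * (s.1 : ℝ) ^ 2) *
      ev 1 (box R) (fw R (bx (cor s))) (T + 6) x₀ ρ) ν := fun s _ =>
    (integrable_of_cont ((nice_fw R _).ev 1 _ (T + 6) x₀)).const_mul _
  have hint := integral_mono (μ := ν) ((integrable_finsetSum _ ii).sub (integrable_const _))
    (integrable_of_cont ((nice_xp 1 R).ev 1 _ (T + 6) x₀)) hev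
  rw [integral_sub' (integrable_finsetSum _ ii) (integrable_const _),
    integral_finsetSum _ ii] at hint
  simp only [integral_const_mul, integral_const, probReal_univ, one_smul] at hint
  have hs : ∑ s ∈ cone R, 1 / (32 * (s.1 : ℝ) ^ 2) * (aep ν 1 x₀ R T / 65)
      ≤ ∑ s ∈ cone R, 1 / (32 * (s.1 : ℝ) ^ 2) *
        ∫ ρ, ev 1 (box R) (fw R (bx (cor s))) (T + 6) x₀ ρ ∂ν := by
    refine Finset.sum_le_sum fun s hs => mul_le_mul_of_nonneg_left ?_ (by positivity)
    have := aep_le hν (bx_cor_subset hs) T x₀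
    linarith
  rw [← Finset.sum_mul] at hs
  have ha0 := aep_nonneg ν (q := 1) (by norm_num) le_rfl x₀ R T
  have ha1 := aep_le_one ν (q := 1) (by norm_num) le_rfl x₀ R T
  have hm := mul_le_mul_of_nonneg_right (sum_cone_ge hR)
    (show 0 ≤ aep ν 1 x₀ R T / 65 by positivity)
  nlinarith

lemma integral_xp_ge {ν : Measure Config} [IsProbabilityMeasure ν] (hν : IsIUD ν)
    {q : ℝ} (hq : q ∈ Set.Ioc (1 / 3 : ℝ) 1) (x₀ : Z2) :
    ∃ ε C : ℝ, 0 < ε ∧ ∀ R T : ℕ, 2 ≤ R →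
      ε * Real.log R * aep ν q x₀ R T - C ≤ ∫ ρ, ev q (box R) (xp q R) (T + 6) x₀ ρ ∂ν := by
  rcases hq.2.lt_or_eq with h | rfl
  · exact integral_xp_ge_of_lt hq.1 h x₀
  · exact integral_xp_ge_one hν x₀

end HV


namespace HV

/-! ### The averaged escape probability vanishes -/

/-- The averaged probability of reaching distance `R` before the origin. -/
noncomputable def esc (ν : Measure Config) (q : ℝ) (x : Z2) (R : ℕ) : ℝ := ⨆ T, aep ν q x R T

section escape

variable {ν : Measure Config} [IsProbabilityMeasure ν] {q : ℝ}

lemma tendsto_aep (h0 : 0 ≤ q) (h1 : q ≤ 1) (x : Z2) (R : ℕ) :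
    Tendsto (fun T => aep ν q x R T) atTop (nhds (esc ν q x R)) :=
  tendsto_atTop_ciSup (aep_mono ν h0 h1 x R)
    ⟨1, by rintro _ ⟨T, rfl⟩; exact aep_le_one ν h0 h1 x R T⟩

lemma esc_nonneg (h0 : 0 ≤ q) (h1 : q ≤ 1) (x : Z2) (R : ℕ) : 0 ≤ esc ν q x R :=
  ge_of_tendsto' (tendsto_aep h0 h1 x R) fun T => aep_nonneg ν h0 h1 x R T

lemma esc_le_one (h0 : 0 ≤ q) (h1 : q ≤ 1) (x : Z2) (R : ℕ) : esc ν q x R ≤ 1 :=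
  le_of_tendsto' (tendsto_aep h0 h1 x R) fun T => aep_le_one ν h0 h1 x R T

lemma aep_le_esc (h0 : 0 ≤ q) (h1 : q ≤ 1) (x : Z2) (R T : ℕ) : aep ν q x R T ≤ esc ν q x R :=
  (aep_mono ν h0 h1 x R).ge_of_tendsto (tendsto_aep h0 h1 x R) T

lemma esc_anti (h0 : 0 ≤ q) (h1 : q ≤ 1) (x : Z2) {k R : ℕ} (hk : 1 ≤ k) (hR : k ≤ R) :
    esc ν q x R ≤ esc ν q x k :=
  le_of_tendsto_of_tendsto' (tendsto_aep h0 h1 x R) (tendsto_aep h0 h1 x k) fun T =>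
    aep_anti ν h0 h1 x hk hR T

/-- The bounds on the supermartingale at the exit time, as the time horizon tends to infinity. -/
lemma esc_ineq (hν : IsIUD ν) (hq : q ∈ Set.Ioc (1 / 3 : ℝ) 1) (x₀ : Z2) :
    ∃ ε C : ℝ, 0 < ε ∧ ∀ R : ℕ, 2 ≤ R →
      ε * Real.log R * esc ν q x₀ R ≤ C + |cc q| * ∫ ρ, |fld R ρ| ∂ν
      + 2 * |cc q| * ∑ k ∈ Finset.Ico 1 R, dl k * (esc ν q x₀ k - esc ν q x₀ R) := by
  have h0 : 0 < q := by linarith [hq.1]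
  have h1 := hq.2
  obtain ⟨ε, C, hε, hlow⟩ := integral_xp_ge hν hq x₀
  refine ⟨ε, C + pot x₀ + |pot 0|, hε, fun R hR => ?_⟩
  have hT : ∀ T : ℕ, ε * Real.log R * aep ν q x₀ R T ≤
      C + pot x₀ + |pot 0| + |cc q| * ∫ ρ, |fld R ρ| ∂ν
      + 2 * |cc q| * ∑ k ∈ Finset.Ico 1 R, dl k * (aep ν q x₀ k (T + 6) - aep ν q x₀ R (T + 6))
      + (1 + |cc q| * ∑ y ∈ box R, |dpot y|) * (2 * (R : ℝ) ^ 2 / ((T + 6 : ℕ) : ℝ)) := fun T => by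
    have := hlow R T hR
    have := integral_xp_le hν h0 h1 R (T := T + 6) (by omega) x₀
    linarith
  have t6 : Tendsto (fun T : ℕ => T + 6) atTop atTop := tendsto_add_atTop_nat 6
  have lim : Tendsto (fun T : ℕ => C + pot x₀ + |pot 0| + |cc q| * ∫ ρ, |fld R ρ| ∂ν
      + 2 * |cc q| * ∑ k ∈ Finset.Ico 1 R, dl k * (aep ν q x₀ k (T + 6) - aep ν q x₀ R (T + 6))
      + (1 + |cc q| * ∑ y ∈ box R, |dpot y|) * (2 * (R : ℝ) ^ 2 / ((T + 6 : ℕ) : ℝ))) atTop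
      (nhds (C + pot x₀ + |pot 0| + |cc q| * ∫ ρ, |fld R ρ| ∂ν
      + 2 * |cc q| * ∑ k ∈ Finset.Ico 1 R, dl k * (esc ν q x₀ k - esc ν q x₀ R)
      + (1 + |cc q| * ∑ y ∈ box R, |dpot y|) * 0)) := by
    refine (tendsto_const_nhds.add (Tendsto.const_mul _ (tendsto_finsetSum _ fun k _ =>
      Tendsto.const_mul _ (((tendsto_aep h0.le h1 x₀ k).comp t6).sub
        ((tendsto_aep h0.le h1 x₀ R).comp t6))))).add (Tendsto.const_mul _ ?_)
    exact (tendsto_const_div_atTop_nhds_zero_nat (2 * (R : ℝ) ^ 2)).comp t6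
  have := le_of_tendsto_of_tendsto' ((tendsto_aep h0.le h1 x₀ R).const_mul (ε * Real.log R)) lim hT
  linarith

lemma esc_tendsto (hν : IsIUD ν) (hq : q ∈ Set.Ioc (1 / 3 : ℝ) 1) (x₀ : Z2) :
    Tendsto (fun R => esc ν q x₀ (R + 1)) atTop (nhds 0) := by
  have h0 : 0 ≤ q := by linarith [hq.1]
  have h1 := hq.2
  obtain ⟨ε, C, hε, hmain⟩ := esc_ineq hν hq x₀
  set e := fun R => esc ν q x₀ R with he
  obtain ⟨p, hp⟩ : ∃ p, p = ⨅ R, e (R + 1) := ⟨_, rfl⟩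
  have hlim : Tendsto (fun R => e (R + 1)) atTop (nhds p) := by
    rw [hp]
    exact tendsto_atTop_ciInf (fun a b hab => esc_anti h0 h1 x₀ (by omega) (by omega))
      ⟨0, by rintro _ ⟨T, rfl⟩; exact esc_nonneg h0 h1 x₀ _⟩
  have hp0 : 0 ≤ p := ge_of_tendsto' hlim fun R => esc_nonneg h0 h1 x₀ _
  have hple : ∀ R, 1 ≤ R → p ≤ e R := by
    intro R hR
    refine le_of_tendsto hlim (eventually_atTop.2 ⟨R, fun b hb => ?_⟩)
    exact esc_anti h0 h1 x₀ hR (by omega)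
  rcases hp0.eq_or_lt with hpz | hpp
  · rw [hpz]; exact hlim
  exfalso
  have hεp : 0 < ε * p := mul_pos hε hpp
  obtain ⟨C1, hC1⟩ := hν.integral_abs_fld (show 0 < ε * p / 4 by positivity)
  obtain ⟨C2, hC2, hdl⟩ := dl_le
  obtain ⟨δ, hδ⟩ : ∃ δ, δ = ε * p / 16 := ⟨_, rfl⟩
  have hδ0 : 0 < δ := by rw [hδ]; positivity
  obtain ⟨N, hN⟩ := eventually_atTop.1 (hlim.eventually (gt_mem_nhds (show p < p + δ by linarith)))
  have hc : |cc q| ≤ 1 / 2 := by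
    have := hq.1
    unfold cc
    rw [abs_le, le_div_iff₀ (by linarith), div_le_iff₀ (by linarith)]
    constructor <;> linarith
  have hc0 := abs_nonneg (cc q)
  obtain ⟨D, hD⟩ : ∃ D, D = ∑ k ∈ Finset.Ico 1 (N + 1), dl k := ⟨_, rfl⟩
  have hD0 : 0 ≤ D := by rw [hD]; exact Finset.sum_nonneg fun k _ => dl_nonneg k
  have hsum : ∀ R : ℕ, 2 ≤ R → ∑ k ∈ Finset.Ico 1 R, dl k * (e k - e R)
      ≤ δ * (4 * (1 + Real.log R) + C2 * 2) + D := by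
    intro R hR
    have hR' := hple R (by omega)
    have a1 : ∀ k ∈ Finset.Ico 1 R, dl k * (e k - e R) ≤
        dl k * δ + if k < N + 1 then dl k else 0 := by
      intro k hk
      have hk1 := (Finset.mem_Ico.1 hk).1
      have hd := dl_nonneg k
      split_ifs with hkN
      · have b1 : e k ≤ 1 := esc_le_one h0 h1 x₀ k
        nlinarith [mul_nonneg hd hδ0.le, mul_nonneg hd (show 0 ≤ 1 - (e k - e R) by linarith)]
      · have b2 := hN (k - 1) (by omega)
        rw [show k - 1 + 1 = k by omega] at b2
        nlinarith [mul_nonneg hd (show 0 ≤ δ - (e k - e R) by linarith)]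
    refine (Finset.sum_le_sum a1).trans ?_
    rw [Finset.sum_add_distrib, ← Finset.sum_mul]
    have a2 : ∑ k ∈ Finset.Ico 1 R, (if k < N + 1 then dl k else 0) ≤ D := by
      rw [← Finset.sum_filter, hD]
      refine Finset.sum_le_sum_of_subset_of_nonneg (fun k hk => ?_) fun k _ _ => dl_nonneg k
      simp only [Finset.mem_filter, Finset.mem_Ico] at hk ⊢
      omega
    have a3 : ∑ k ∈ Finset.Ico 1 R, dl k ≤ 4 * (1 + Real.log R) + C2 * 2 := by
      calc ∑ k ∈ Finset.Ico 1 R, dl k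
          ≤ ∑ k ∈ Finset.Ico 1 R, (4 * (1 / (k : ℝ)) + C2 * (1 / (k : ℝ) ^ 2)) := by
            refine Finset.sum_le_sum fun k hk => (hdl k (Finset.mem_Ico.1 hk).1).trans ?_
            rw [mul_one_div, mul_one_div]
        _ ≤ _ := by
            rw [Finset.sum_add_distrib, ← Finset.mul_sum, ← Finset.mul_sum]
            exact add_le_add (mul_le_mul_of_nonneg_left (sum_inv_le R) (by norm_num))
              (mul_le_mul_of_nonneg_left (sum_inv_sq_le R) hC2)
    have := mul_le_mul_of_nonneg_right a3 hδ0.le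
    linarith
  obtain ⟨K, hK⟩ : ∃ K, K = |C| + |C1| + δ * (4 + C2 * 2) + D := ⟨_, rfl⟩
  have hbd : ∀ R : ℕ, 2 ≤ R → ε * p / 2 * Real.log R ≤ K := by
    intro R hR
    have hlog : 0 ≤ Real.log R := Real.log_natCast_nonneg R
    have b1 := hmain R hR
    have b2 := hC1 R (by omega)
    have b3 := hsum R hR
    have b4 : ε * Real.log R * p ≤ ε * Real.log R * e R :=
      mul_le_mul_of_nonneg_left (hple R (by omega)) (by positivity)
    have b5 : |cc q| * ∫ ρ, |fld R ρ| ∂ν ≤ 1 / 2 * (ε * p / 4 * Real.log R + |C1|) :=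
      mul_le_mul hc (b2.trans (by linarith [le_abs_self C1]))
        (integral_nonneg fun _ => abs_nonneg _) (by norm_num)
    have b6 : 2 * |cc q| * ∑ k ∈ Finset.Ico 1 R, dl k * (e k - e R) ≤
        1 * (δ * (4 * (1 + Real.log R) + C2 * 2) + D) :=
      mul_le_mul (by linarith) b3 (Finset.sum_nonneg fun k hk => mul_nonneg (dl_nonneg k) (by
        have := Finset.mem_Ico.1 hk
        have b7 : e R ≤ e k := esc_anti h0 h1 x₀ this.1 this.2.le
        linarith)) (by norm_num)
    rw [hδ] at b6 hK
    have := le_abs_self C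
    have := abs_nonneg C1
    nlinarith
  have htop : Tendsto (fun R : ℕ => ε * p / 2 * Real.log R) atTop atTop :=
    (Real.tendsto_log_atTop.comp tendsto_natCast_atTop_atTop).const_mul_atTop (by positivity)
  obtain ⟨R, hR1, hR2⟩ := ((htop.eventually_gt_atTop K).and (eventually_ge_atTop 2)).exists
  linarith [hbd R hR2]

/-! ### Almost sure return to a given vertex -/

/-- The indicator of the complement of the origin. -/
def off (x : Z2) (_ : Config) : ℝ := if x = 0 then 0 else 1

/-- The probability that the walk has not visited the origin by time `T`. -/
noncomputable def sv (q : ℝ) (T : ℕ) (x : Z2) (ρ : Config) : ℝ := ev q {x | x ≠ 0} off T x ρ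

lemma off_nonneg (x : Z2) (ρ : Config) : 0 ≤ off x ρ := by unfold off; split_ifs <;> norm_num

lemma off_le_one (x : Z2) (ρ : Config) : off x ρ ≤ 1 := by unfold off; split_ifs <;> norm_num

lemma nice_sv (q : ℝ) (T : ℕ) : Nice (sv q T) :=
  Nice.ev (fun _ => continuous_const) q _ T

lemma sv_le (h0 : 0 ≤ q) (h1 : q ≤ 1) (R T : ℕ) (x : Z2) (ρ : Config) :
    sv q T x ρ ≤ ep q R T x ρ + ev q (box R) (inb R) T x ρ := by
  have hle : ∀ x ρ, off x ρ ≤ ex R x ρ + inb R x ρ := by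
    intro x ρ
    unfold off ex inb
    simp only [mem_box]
    by_cases hx : x = 0
    · simp only [hx, if_true, ne_eq, not_true_eq_false, false_and, if_false]
      split_ifs <;> norm_num
    · by_cases h : R ≤ nm x
      · simp [hx, h, Nat.not_lt.2 h]
      · simp [hx, h, Nat.lt_of_not_le h]
  refine le_trans ?_ ((ev_mono h0 h1 (D := box R) hle T x ρ).trans_eq (ev_add _ _ _ _ _ _ _))
  unfold sv
  induction T generalizing x ρ with
  | zero => rfl
  | succ T ih =>
    by_cases hx : x ∈ box R
    · rw [ev_succ_mem _ _ _ (Finset.mem_coe.2 hx), ev_succ_mem _ _ _ (show x ∈ {x | x ≠ 0} from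
        (mem_box.1 hx).1)]
      exact step_mono h0 h1 fun b σ => ih _ _
    · rw [ev_notMem (D := (box R : Set Z2)) _ _ _ (by simpa using hx)]
      by_cases hx0 : x = 0
      · rw [ev_notMem _ _ _ (by simp [hx0])]
      · rw [show off x ρ = 1 by simp [off, hx0]]
        exact ev_le_one h0 h1 off_le_one _ _ _

lemma exists_integral_sv_lt (hν : IsIUD ν) (hq : q ∈ Set.Ioc (1 / 3 : ℝ) 1) (x₀ : Z2) {ε : ℝ}
    (hε : 0 < ε) : ∃ T, ∫ ρ, sv q T x₀ ρ ∂ν < ε := by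
  have h0 : 0 ≤ q := by linarith [hq.1]
  have h1 := hq.2
  obtain ⟨R, hR⟩ := ((esc_tendsto hν hq x₀).eventually
    (gt_mem_nhds (show 0 < ε / 2 by positivity))).exists
  have ht := tendsto_const_div_atTop_nhds_zero_nat (2 * ((R + 1 : ℕ) : ℝ) ^ 2)
  obtain ⟨T, hT1, hT2⟩ := ((ht.eventually
    (gt_mem_nhds (show 0 < ε / 2 by positivity))).and (eventually_ge_atTop 1)).exists
  refine ⟨T, ?_⟩
  have rT : (0 : ℝ) < T := by exact_mod_cast hT2
  have hpt : ∀ ρ, sv q T x₀ ρ ≤ ep q (R + 1) T x₀ ρ + 2 * ((R + 1 : ℕ) : ℝ) ^ 2 / T := by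
    intro ρ
    have h2 : ev q (box (R + 1)) (inb (R + 1)) T x₀ ρ ≤ 2 * ((R + 1 : ℕ) : ℝ) ^ 2 / T := by
      rw [le_div_iff₀ rT, mul_comm]
      exact ev_inb_le h0 h1 (R + 1) T x₀ ρ
    linarith [sv_le h0 h1 (R + 1) T x₀ ρ]
  have hint := integral_mono (μ := ν) (integrable_of_cont (nice_sv q T x₀))
    ((integrable_of_cont (nice_ep q (R + 1) T x₀)).add (integrable_const _)) hpt
  rw [integral_add' (integrable_of_cont (nice_ep q (R + 1) T x₀)) (integrable_const _)] at hint
  have := aep_le_esc (ν := ν) h0 h1 x₀ (R + 1) T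
  simp only [aep, integral_const, probReal_univ, one_smul] at this hint
  linarith

lemma sv_nonneg (h0 : 0 ≤ q) (h1 : q ≤ 1) (T : ℕ) (x : Z2) (ρ : Config) : 0 ≤ sv q T x ρ :=
  ev_nonneg h0 h1 off_nonneg _ _ _

lemma ae_sv_lt (hν : IsIUD ν) (hq : q ∈ Set.Ioc (1 / 3 : ℝ) 1) (x₀ : Z2) :
    ∀ᵐ ρ ∂ν, ∀ ε > 0, ∃ T, sv q T x₀ ρ < ε := by
  have h0 : 0 ≤ q := by linarith [hq.1]
  have h1 := hq.2
  have key : ∀ n : ℕ, ν {ρ | ∀ T, 1 / ((n : ℝ) + 1) ≤ sv q T x₀ ρ} = 0 := by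
    intro n
    have hn : (0 : ℝ) < 1 / ((n : ℝ) + 1) := Nat.one_div_pos_of_nat
    rw [← measureReal_eq_zero_iff]
    refine le_antisymm (le_of_forall_pos_le_add fun δ hδ => ?_) measureReal_nonneg
    obtain ⟨T, hT⟩ := exists_integral_sv_lt hν hq x₀ (mul_pos hn hδ)
    have hm := mul_meas_ge_le_integral_of_nonneg (μ := ν)
      (Eventually.of_forall fun ρ => sv_nonneg h0 h1 T x₀ ρ)
      (integrable_of_cont (nice_sv q T x₀)) (1 / ((n : ℝ) + 1))
    have hs : ν.real {ρ | ∀ T, 1 / ((n : ℝ) + 1) ≤ sv q T x₀ ρ}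
        ≤ ν.real {ρ | 1 / ((n : ℝ) + 1) ≤ sv q T x₀ ρ} :=
      measureReal_mono fun ρ (hρ : ∀ T, _) => hρ T
    have h3 := lt_of_mul_lt_mul_left (hm.trans_lt hT) hn.le
    linarith
  have hall : ∀ᵐ ρ ∂ν, ∀ n : ℕ, ¬ ∀ T, 1 / ((n : ℝ) + 1) ≤ sv q T x₀ ρ := by
    rw [ae_all_iff]
    intro n
    rw [ae_iff]
    simpa using key n
  filter_upwards [hall] with ρ hρ ε hε
  obtain ⟨n, hn⟩ := exists_nat_one_div_lt hε
  have := hρ n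
  push Not at this
  obtain ⟨T, hT⟩ := this
  exact ⟨T, hT.trans hn⟩

/-- By invariance, the previous statement holds for all starting points, all target vertices and
all finite modifications of the configuration simultaneously. -/
lemma ae_sv_lt_all (hν : IsIUD ν) (hq : q ∈ Set.Ioc (1 / 3 : ℝ) 1) :
    ∀ᵐ ρ ∂ν, ∀ (x v : Z2) (A : Finset Z2), ∀ ε > 0, ∃ T, sv q T x (shift v (flip A ρ)) < ε := by
  rw [ae_all_iff]
  intro x
  rw [ae_all_iff]
  intro v
  rw [ae_all_iff]
  intro A
  have h1 : MeasurePreserving (flip A) ν ν := ⟨(continuous_flip A).measurable, hν.map_flip A⟩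
  have h2 : MeasurePreserving (shift v) ν ν := ⟨(continuous_shift v).measurable, hν.map_shift v⟩
  exact (h2.comp h1).quasiMeasurePreserving.ae (ae_sv_lt hν hq x)

end escape

end HV


namespace HV

/-! ### From expectations to the law of the trajectory -/

/-- The probability that the walk started from `x` does not visit `v` by time `T`. -/
noncomputable def sw (q : ℝ) (v : Z2) (T : ℕ) (x : Z2) (ρ : Config) : ℝ :=
  sv q T (x - v) (shift v ρ)

/-- The probability that the walk avoids `v` in its next `T` steps; the starting point itself is
allowed to be `v`. -/
noncomputable def sp (q : ℝ) (v : Z2) : ℕ → Z2 → Config → ℝ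
  | 0 => fun _ _ => 1
  | T + 1 => step q (sw q v T)

lemma shift_update (v x : Z2) (ρ : Config) (b : Bool) :
    Function.update (shift v ρ) (x - v) b = shift v (Function.update ρ x b) := by
  funext y
  unfold shift
  by_cases h : y = x - v
  · subst h; simp
  · rw [Function.update_of_ne h, Function.update_of_ne]
    rintro rfl
    simp at h

lemma sw_eq (q : ℝ) (v : Z2) (T : ℕ) (x : Z2) (ρ : Config) :
    sw q v T x ρ = if x = v then 0 else sp q v T x ρ := by
  by_cases hx : x = v
  · rw [if_pos hx, sw, sv]
    cases T with
    | zero => simp [ev_zero, off, hx]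
    | succ T => rw [ev_notMem _ _ _ (by simp [hx])]; simp [off, hx]
  · have hx' : x - v ≠ 0 := sub_ne_zero.2 hx
    rw [if_neg hx, sw, sv]
    cases T with
    | zero => simp [ev_zero, off, hx', sp]
    | succ T =>
      rw [ev_succ_mem _ _ _ (show x - v ∈ {x : Z2 | x ≠ 0} from hx'), sp]
      unfold step
      refine Finset.sum_congr rfl fun b _ => Finset.sum_congr rfl fun σ _ => ?_
      rw [shift_update, sub_add_eq_add_sub, show shift v ρ (x - v) = ρ x by simp [shift]]
      rfl

lemma sw_nonneg {q : ℝ} (h0 : 0 ≤ q) (h1 : q ≤ 1) (v : Z2) (T : ℕ) (x : Z2) (ρ : Config) :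
    0 ≤ sw q v T x ρ := sv_nonneg h0 h1 _ _ _

/-- The one-step transition probabilities of the process agree with the operator `step`. -/
lemma tsum_weight {q : ℝ} (h0 : 0 ≤ q) (h1 : q ≤ 1) (s : State 1) {F : Z2 → Config → ℝ}
    (hF : ∀ x ρ, 0 ≤ F x ρ) :
    ∑' z : Z2, weight q 1 s 0 z * ENNReal.ofReal (F z (apply' 1 s 0 z).2)
      = ENNReal.ofReal (step q F (s.1 0) s.2) := by
  obtain ⟨⟨u, w⟩, hx⟩ : ∃ x, x = s.1 0 := ⟨_, rfl⟩
  rw [tsum_eq_sum (s := {(u + 1, w), (u - 1, w), (u, w + 1), (u, w - 1)}) ?_]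
  swap
  · intro z hz
    obtain ⟨k, l⟩ := z
    simp only [Finset.mem_insert, Finset.mem_singleton, not_or] at hz
    obtain ⟨z1, z2, z3, z4⟩ := hz
    rw [weight, ← hx, if_neg, if_neg, zero_mul]
    · simp only [Prod.mk_add_mk, Prod.mk_sub_mk, add_zero, sub_zero]
      exact not_or.2 ⟨z3, z4⟩
    · simp only [Prod.mk_add_mk, Prod.mk_sub_mk, add_zero, sub_zero]
      exact not_or.2 ⟨z1, z2⟩
  have d1 : ((u + 1, w) : Z2) ∉ ({(u - 1, w), (u, w + 1), (u, w - 1)} : Finset Z2) := by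
    simp; omega
  have d2 : ((u - 1, w) : Z2) ∉ ({(u, w + 1), (u, w - 1)} : Finset Z2) := by simp
  have d3 : ((u, w + 1) : Z2) ∉ ({(u, w - 1)} : Finset Z2) := by simp; omega
  rw [Finset.sum_insert d1, Finset.sum_insert d2, Finset.sum_insert d3, Finset.sum_singleton,
    step_eq]
  have g : ∀ b b' : Bool, 0 ≤ pr q b b' / 2 := fun b b' => by
    have := pr_nonneg h0 h1 b b'; positivity
  have w1 : weight q 1 s 0 (u + 1, w) = ENNReal.ofReal (pr q (s.2 (u, w)) true / 2) := by
    rw [weight, ← hx, if_pos (by simp)]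
    cases s.2 (u, w) <;> simp [pr]
  have w2 : weight q 1 s 0 (u - 1, w) = ENNReal.ofReal (pr q (s.2 (u, w)) true / 2) := by
    rw [weight, ← hx, if_pos (by simp)]
    cases s.2 (u, w) <;> simp [pr]
  have w3 : weight q 1 s 0 (u, w + 1) = ENNReal.ofReal (pr q (s.2 (u, w)) false / 2) := by
    rw [weight, ← hx, if_neg (by simp), if_pos (by simp)]
    cases s.2 (u, w) <;> simp [pr]
  have w4 : weight q 1 s 0 (u, w - 1) = ENNReal.ofReal (pr q (s.2 (u, w)) false / 2) := by
    rw [weight, ← hx, if_neg (by simp), if_pos (by simp)]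
    cases s.2 (u, w) <;> simp [pr]
  rw [w1, w2, w3, w4]
  simp only [apply', ← hx, if_true, Prod.mk_add_mk, add_zero]
  rw [if_neg (by omega), if_neg (by omega), ← ENNReal.ofReal_mul (g _ _),
    ← ENNReal.ofReal_mul (g _ _), ← ENNReal.ofReal_mul (g _ _), ← ENNReal.ofReal_mul (g _ _)]
  have m : ∀ b b' x ρ, 0 ≤ pr q b b' / 2 * F x ρ := fun b b' x ρ => mul_nonneg (g _ _) (hF _ _)
  rw [← ENNReal.ofReal_add (m _ _ _ _) (m _ _ _ _), ← ENNReal.ofReal_add (m _ _ _ _)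
    (add_nonneg (m _ _ _ _) (m _ _ _ _)), ← ENNReal.ofReal_add (m _ _ _ _)
    (add_nonneg (m _ _ _ _) (add_nonneg (m _ _ _ _) (m _ _ _ _)))]
  congr 1
  simp only [← sub_eq_add_neg]
  ring

lemma active_one (t : ℕ) : active 1 Nat.one_pos t = 0 := Subsingleton.elim _ _

lemma seq_congr {ρ : Config} {c c' : Path} {t : ℕ} (h : ∀ s < t, c s = c' s) :
    seq 1 Nat.one_pos ρ c t = seq 1 Nat.one_pos ρ c' t := by
  induction t with
  | zero => rfl
  | succ t ih =>
    rw [seq, seq, ih fun s hs => h s (by omega), h t (by omega)]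

lemma seq_succ_pos (ρ : Config) (c : Path) (t : ℕ) :
    (seq 1 Nat.one_pos ρ c (t + 1)).1 0 = c t := by
  rw [seq, apply', active_one]
  simp

/-- Markov property: given a prefix of the trajectory, the probability of avoiding `v` in the next
`T` steps is at most `sp`. -/
lemma measure_avoid_le {q : ℝ} (h0 : 0 ≤ q) (h1 : q ≤ 1) {ρ : Config} {μ : Measure Path}
    (hμ : IsLaw q 1 Nat.one_pos ρ μ) (v : Z2) (T t : ℕ) (c : Path) :
    μ {y | (∀ s < t, y s = c s) ∧ ∀ s, t ≤ s → s < t + T → y s ≠ v} ≤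
      (∏ s ∈ Finset.range t, weight q 1 (seq 1 Nat.one_pos ρ c s) 0 (c s)) *
        ENNReal.ofReal (sp q v T ((seq 1 Nat.one_pos ρ c t).1 0) (seq 1 Nat.one_pos ρ c t).2) := by
  induction T generalizing t c with
  | zero =>
    have := hμ t c
    simp only [active_one] at this
    rw [← this]
    simp only [sp, ENNReal.ofReal_one, mul_one]
    exact measure_mono fun y hy => hy.1
  | succ T ih =>
    set P := ∏ s ∈ Finset.range t, weight q 1 (seq 1 Nat.one_pos ρ c s) 0 (c s) with hP
    set S := seq 1 Nat.one_pos ρ c t with hS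
    have hterm : ∀ z : Z2, μ {y | z ≠ v ∧ (∀ s < t + 1, y s = Function.update c t z s) ∧
        ∀ s, t + 1 ≤ s → s < t + 1 + T → y s ≠ v} ≤
        P * (weight q 1 S 0 z * ENNReal.ofReal (sw q v T z (apply' 1 S 0 z).2)) := by
      intro z
      by_cases hz : z = v
      · simp [hz]
      have hcs : ∀ s < t, Function.update c t z s = c s := fun s hs =>
        Function.update_of_ne (by omega) _ _
      have h2 := ih (t + 1) (Function.update c t z)
      rw [Finset.prod_range_succ, seq_congr hcs, seq_succ_pos, seq, seq_congr hcs,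
        Function.update_self, active_one,
        Finset.prod_congr rfl (g := fun s => weight q 1 (seq 1 Nat.one_pos ρ c s) 0 (c s))
          fun s hs => ?_] at h2
      · rw [sw_eq, if_neg hz, ← mul_assoc]
        exact (measure_mono fun y hy => hy.2).trans h2
      · have hst := Finset.mem_range.1 hs
        rw [hcs s hst, seq_congr fun r hr => hcs r (by omega)]
    calc μ {y | (∀ s < t, y s = c s) ∧ ∀ s, t ≤ s → s < t + (T + 1) → y s ≠ v}
        ≤ μ (⋃ z : Z2, {y | z ≠ v ∧ (∀ s < t + 1, y s = Function.update c t z s) ∧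
          ∀ s, t + 1 ≤ s → s < t + 1 + T → y s ≠ v}) := by
          refine measure_mono fun y hy => Set.mem_iUnion.2 ⟨y t, hy.2 t le_rfl (by omega), ?_, ?_⟩
          · intro s hs
            by_cases hst : s = t
            · subst hst; simp
            · rw [Function.update_of_ne hst]
              exact hy.1 s (by omega)
          · exact fun s hs hs' => hy.2 s (by omega) (by omega)
      _ ≤ ∑' z : Z2, P * (weight q 1 S 0 z * ENNReal.ofReal (sw q v T z (apply' 1 S 0 z).2)) :=
          (measure_iUnion_le _).trans (ENNReal.tsum_le_tsum hterm)
      _ = P * ENNReal.ofReal (sp q v (T + 1) (S.1 0) S.2) := by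
          rw [ENNReal.tsum_mul_left, tsum_weight h0 h1 S (sw_nonneg h0 h1 v T), sp]

lemma exists_flip (ρ : Config) (c : Path) (t : ℕ) :
    ∃ A : Finset Z2, (seq 1 Nat.one_pos ρ c t).2 = flip A ρ := by
  induction t with
  | zero => exact ⟨∅, by funext x; simp [seq, flip]⟩
  | succ t ih =>
    obtain ⟨A, hA⟩ := ih
    rw [seq, apply', hA]
    set x := (seq 1 Nat.one_pos ρ c t).1 (active 1 Nat.one_pos t)
    generalize (if (c t).2 = x.2 then true else false) = b
    by_cases hb : b = ρ x
    · refine ⟨A.erase x, ?_⟩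
      funext y
      by_cases hy : y = x
      · subst hy; simp [flip, hb]
      · simp [flip, hy]
    · refine ⟨insert x A, ?_⟩
      funext y
      by_cases hy : y = x
      · rw [hy]
        have : b = !ρ x := by cases b <;> cases h : ρ x <;> simp_all
        simp [flip, this]
      · simp [flip, hy]

/-- A finite history changes the labels only at finitely many vertices, so the hypothesis on finite
modifications of `ρ` applies to the walk restarted after it: almost surely `v` is hit later. -/
lemma measure_never_eq_zero {q : ℝ} (h0 : 0 ≤ q) (h1 : q ≤ 1) {ρ : Config} {μ : Measure Path}
    [IsProbabilityMeasure μ] (hμ : IsLaw q 1 Nat.one_pos ρ μ)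
    (hρ : ∀ (x v : Z2) (A : Finset Z2), ∀ ε > 0, ∃ T, sv q T x (shift v (flip A ρ)) < ε)
    (v : Z2) (t : ℕ) (c : Path) (hc : (seq 1 Nat.one_pos ρ c t).1 0 ≠ v) :
    μ {y | (∀ s < t, y s = c s) ∧ ∀ s, t ≤ s → y s ≠ v} = 0 := by
  obtain ⟨A, hA⟩ := exists_flip ρ c t
  set S := seq 1 Nat.one_pos ρ c t with hS
  have hP : (∏ s ∈ Finset.range t, weight q 1 (seq 1 Nat.one_pos ρ c s) 0 (c s)) ≤ 1 := by
    have := hμ t c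
    simp only [active_one] at this
    rw [← this]
    exact prob_le_one
  refine le_antisymm (ENNReal.le_of_forall_pos_le_add fun ε hε _ => ?_) zero_le
  obtain ⟨T, hT⟩ := hρ (S.1 0 - v) v A ε hε
  have h2 := sw_eq q v T (S.1 0) S.2
  rw [if_neg hc, sw, hA] at h2
  rw [zero_add]
  calc μ {y | (∀ s < t, y s = c s) ∧ ∀ s, t ≤ s → y s ≠ v}
      ≤ μ {y | (∀ s < t, y s = c s) ∧ ∀ s, t ≤ s → s < t + T → y s ≠ v} :=
        measure_mono fun y hy => ⟨hy.1, fun s hs _ => hy.2 s hs⟩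
    _ ≤ 1 * ENNReal.ofReal (sp q v T (S.1 0) S.2) :=
        (measure_avoid_le h0 h1 hμ v T t c).trans (mul_le_mul' hP le_rfl)
    _ ≤ ε := by
        rw [one_mul, hA, ← h2]
        exact ENNReal.ofReal_le_of_le_toReal (by simpa using hT.le)

lemma measure_recurrent {q : ℝ} (h0 : 0 ≤ q) (h1 : q ≤ 1) {ρ : Config} {μ : Measure Path}
    [IsProbabilityMeasure μ] (hμ : IsLaw q 1 Nat.one_pos ρ μ)
    (hρ : ∀ (x v : Z2) (A : Finset Z2), ∀ ε > 0, ∃ T, sv q T x (shift v (flip A ρ)) < ε) :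
    μ {y | Recurrent 1 Nat.one_pos ρ y} = 1 := by
  have hnull : μ {y | Recurrent 1 Nat.one_pos ρ y}ᶜ = 0 := by
    -- A non-recurrent trajectory avoids some `v` after some finite prefix `l` not ending at `v`.
    have hsub : {y | Recurrent 1 Nat.one_pos ρ y}ᶜ ⊆ ⋃ (v : Z2), ⋃ (l : List Z2),
        {y | (seq 1 Nat.one_pos ρ (fun s => l.getD s 0) l.length).1 0 ≠ v ∧
          (∀ s < l.length, y s = l.getD s 0) ∧ ∀ s, l.length ≤ s → y s ≠ v} := by
      intro y hy
      simp only [Set.mem_compl_iff, Set.mem_ofPred_eq, Recurrent] at hy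
      push Not at hy
      obtain ⟨v, hv⟩ := hy
      obtain ⟨n, hn⟩ := hv.bddAbove
      have hlate : ∀ s, n ≤ s → y s ≠ v := by
        intro s hs hys
        have := hn (show s + 1 ∈ {t | ∃ i, (seq 1 Nat.one_pos ρ y t).1 i = v} from
          ⟨0, by rw [seq_succ_pos, hys]⟩)
        omega
      refine Set.mem_iUnion.2 ⟨v, Set.mem_iUnion.2
        ⟨List.ofFn fun i : Fin (n + 1) => y i, ?_⟩⟩
      have hget : ∀ s < n + 1, y s = (List.ofFn fun i : Fin (n + 1) => y i).getD s 0 := by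
        intro s hs
        rw [List.getD_eq_getElem _ _ (by simpa using hs), List.getElem_ofFn]
      refine ⟨?_, ?_, ?_⟩
      · rw [List.length_ofFn, ← seq_congr (c := y) hget, seq_succ_pos]
        exact hlate n le_rfl
      · rw [List.length_ofFn]; exact hget
      · rw [List.length_ofFn]; exact fun s hs => hlate s (by omega)
    refine measure_mono_null hsub (measure_iUnion_null fun v => measure_iUnion_null fun l => ?_)
    by_cases hc : (seq 1 Nat.one_pos ρ (fun s => l.getD s 0) l.length).1 0 = v
    · exact measure_mono_null (fun y hy => hy.1 hc) measure_empty
    · exact measure_mono_null (fun y hy => hy.2)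
        (measure_never_eq_zero h0 h1 hμ hρ v l.length (fun s => l.getD s 0) hc)
  refine le_antisymm prob_le_one ?_
  have := measure_union_le (μ := μ) {y | Recurrent 1 Nat.one_pos ρ y}
    {y | Recurrent 1 Nat.one_pos ρ y}ᶜ
  rwa [Set.union_compl_self, measure_univ, hnull, add_zero] at this

end HV

/-- **Theorem (recurrence for IID uniform initial labels).**
Let `q ∈ (1/3, 1]` and let the initial labels be drawn independently and uniformly from
`{H, V}`.  Then the single-walker `H`–`V` walk with parameter `q` is recurrent almost
surely; that is, `p_rec(ρ) = 1` for almost every label configuration `ρ` sampled from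
the IUD measure. -/
theorem hv_walk_iud_recurrent
    (q : ℝ) (hq : q ∈ Set.Ioc (1 / 3 : ℝ) 1)
    (ν : MeasureTheory.Measure HV.Config) [MeasureTheory.IsProbabilityMeasure ν]
    (hν : HV.IsIUD ν)
    (μ : HV.Config → MeasureTheory.Measure HV.Path)
    (hprob : ∀ ρ, MeasureTheory.IsProbabilityMeasure (μ ρ))
    (hμ : ∀ ρ, HV.IsLaw q 1 Nat.one_pos ρ (μ ρ)) :
    ∀ᵐ ρ ∂ν, (μ ρ) {y | HV.Recurrent 1 Nat.one_pos ρ y} = 1 := by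
  have h0 : 0 ≤ q := by linarith [hq.1]
  filter_upwards [HV.ae_sv_lt_all hν hq] with ρ hρ
  have := hprob ρ
  exact HV.measure_recurrent h0 hq.2 (hμ ρ) hρ
end

section
/- Let (X_t, ξ_t)_{t≥0} be a multi-walker stack walk on G with a regular turn order and a regular initial stack. Then the walk is either recurrent or transient; i.e., either every vertex of G is visited infinitely many times, or every vertex of G is visited at most finitely many times. -/
/-!
Being visited infinitely often propagates along edges, so by connectedness it holds at every
vertex as soon as it holds at one.

If `v` is visited infinitely often, then walkers also *leave* `v` infinitely often, because each
walker standing at `v` eventually moves (`infinite_fires`). After `k` departures from `v` the stack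
at `v` is the initial one shifted by `k` (`walk_stack`), so the walker making the departure
preceded by exactly `k` others steps to `ξ0 v (k + 1)`. Every neighbor `y` of `v` occurs infinitely
often in the sequence `ξ0 v`, hence `y` is visited infinitely often (`visited_of_adj`).
-/

open Filter

namespace StackWalk

variable {V : Type*}

/-- The state of a multi-walker stack walk: the positions of the `n` walkers together
with the current stack. -/
abbrev State (V : Type*) (n : ℕ) := (Fin n → V) × (V → ℕ → V)

/-- `ξ` is a stack of the graph `G`: `ξ x m` is always a neighbor of `x`. -/
def IsStack (G : SimpleGraph V) (ξ : V → ℕ → V) : Prop :=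
  ∀ x m, G.Adj x (ξ x m)

/-- A stack is regular if, for every vertex `x`, every neighbor of `x` appears
infinitely many times in the stack of `x`. -/
def RegularStack (G : SimpleGraph V) (ξ : V → ℕ → V) : Prop :=
  ∀ x y, G.Adj x y → {m : ℕ | ξ x m = y}.Infinite

open Classical in
/-- The popping operation at `x`: remove the top card of the stack of `x`. -/
noncomputable def pop (x : V) (ξ : V → ℕ → V) : V → ℕ → V :=
  fun y m => if y = x then ξ y (m + 1) else ξ y m

/-- One step of the stack walk performed by walker `i`: the stack at the current
location of walker `i` is popped, and walker `i` moves to the new top card. -/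
noncomputable def step (n : ℕ) (s : State V n) (i : Fin n) : State V n :=
  (Function.update s.1 i (pop (s.1 i) s.2 (s.1 i) 0), pop (s.1 i) s.2)

/-- The multi-walker stack walk with initial locations `x0`, initial stack `ξ0` and
turn order `o` (where `o t = some i` means walker `i` moves at the `(t+1)`-st step, and
`o t = none` means nobody moves). -/
noncomputable def walk (n : ℕ) (x0 : Fin n → V) (ξ0 : V → ℕ → V)
    (o : ℕ → Option (Fin n)) : ℕ → State V n
  | 0 => (x0, ξ0)
  | t + 1 =>
    match o t with
    | none => walk n x0 ξ0 o t
    | some i => step n (walk n x0 ξ0 o t) i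

/-- A turn order is regular if every walker performs infinitely many steps. -/
def RegularOrder (n : ℕ) (o : ℕ → Option (Fin n)) : Prop :=
  ∀ i : Fin n, {t : ℕ | o t = some i}.Infinite

/-- A (trajectory of a) stack walk is recurrent if every vertex is visited infinitely
many times. -/
def Recurrent (n : ℕ) (w : ℕ → State V n) : Prop :=
  ∀ v : V, {t : ℕ | ∃ i, (w t).1 i = v}.Infinite

/-- A (trajectory of a) stack walk is transient if every vertex is visited at most
finitely many times. -/
def Transient (n : ℕ) (w : ℕ → State V n) : Prop :=
  ∀ v : V, {t : ℕ | ∃ i, (w t).1 i = v}.Finite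

end StackWalk

namespace StackWalk

/-- Some walker leaves `v` in the step from time `t` to time `t + 1`. -/
def Fires {V : Type*} (n : ℕ) (o : ℕ → Option (Fin n)) (w : ℕ → State V n) (v : V) (t : ℕ) :
    Prop :=
  ∃ i, o t = some i ∧ (w t).1 i = v

section

variable {V : Type*} {n : ℕ} (x0 : Fin n → V) (ξ0 : V → ℕ → V) (o : ℕ → Option (Fin n))

lemma walk_succ_none {t : ℕ} (h : o t = none) :
    walk n x0 ξ0 o (t + 1) = walk n x0 ξ0 o t := by
  simp [walk, h]

lemma walk_succ_some {t : ℕ} {i : Fin n} (h : o t = some i) :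
    walk n x0 ξ0 o (t + 1) = step n (walk n x0 ξ0 o t) i := by
  simp [walk, h]

lemma walk_pos_of_not_turn {t : ℕ} {i : Fin n} (h : o t ≠ some i) :
    (walk n x0 ξ0 o (t + 1)).1 i = (walk n x0 ξ0 o t).1 i := by
  rcases hj : o t with _ | j
  · rw [walk_succ_none x0 ξ0 o hj]
  · rw [walk_succ_some x0 ξ0 o hj]
    have hij : i ≠ j := fun e => h (by rw [hj, e])
    simp [step, hij]

open Classical in
lemma walk_stack (v : V) (t m : ℕ) :
    (walk n x0 ξ0 o t).2 v m = ξ0 v (m + Nat.count (Fires n o (walk n x0 ξ0 o) v) t) := by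
  induction t generalizing m with
  | zero => simp [walk]
  | succ t ih =>
    rw [Nat.count_succ]
    rcases hj : o t with _ | j
    · have hf : ¬ Fires n o (walk n x0 ξ0 o) v t := by simp [Fires, hj]
      rw [walk_succ_none x0 ξ0 o hj, ih, if_neg hf, add_zero]
    · rw [walk_succ_some x0 ξ0 o hj]
      by_cases hv : v = (walk n x0 ξ0 o t).1 j
      · have hf : Fires n o (walk n x0 ξ0 o) v t := ⟨j, hj, hv.symm⟩
        rw [if_pos hf]
        simp only [step, pop, if_pos hv]
        rw [ih]
        congr 1
        omega
      · have hf : ¬ Fires n o (walk n x0 ξ0 o) v t := by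
          rintro ⟨i, hi, e⟩
          rw [hj, Option.some.injEq] at hi
          exact hv (by rw [hi, e])
        rw [if_neg hf]
        simp only [step, pop, if_neg hv]
        rw [ih, add_zero]

lemma infinite_fires (ho : RegularOrder n o) {v : V}
    (hv : {t : ℕ | ∃ i, (walk n x0 ξ0 o t).1 i = v}.Infinite) :
    {t : ℕ | Fires n o (walk n x0 ξ0 o) v t}.Infinite := by
  classical
  refine Set.infinite_of_forall_exists_gt fun a => ?_
  obtain ⟨t, ⟨i, hi⟩, hat⟩ := hv.exists_gt a
  have hex : ∃ d, o (t + d) = some i := by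
    obtain ⟨s, hs, hts⟩ := (ho i).exists_gt t
    exact ⟨s - t, by rw [Nat.add_sub_cancel' hts.le]; exact hs⟩
  -- Walker `i` waits at `v` until its first turn after time `t`.
  have hstay : ∀ d ≤ Nat.find hex, (walk n x0 ξ0 o (t + d)).1 i = v := by
    intro d
    induction d with
    | zero => exact fun _ => hi
    | succ d ih =>
      intro hd
      rw [← add_assoc, walk_pos_of_not_turn x0 ξ0 o (Nat.find_min hex hd)]
      exact ih (by omega)
  exact ⟨t + Nat.find hex, ⟨i, Nat.find_spec hex, hstay _ le_rfl⟩, by omega⟩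

lemma visited_of_adj {G : SimpleGraph V} (hreg : RegularStack G ξ0) (ho : RegularOrder n o)
    {v y : V} (hvy : G.Adj v y) (hv : {t : ℕ | ∃ i, (walk n x0 ξ0 o t).1 i = v}.Infinite) :
    {t : ℕ | ∃ i, (walk n x0 ξ0 o t).1 i = y}.Infinite := by
  classical
  have hinf := infinite_fires x0 ξ0 o ho hv
  refine Set.infinite_of_forall_exists_gt fun a => ?_
  -- The card `ξ0 v 0` is discarded by the first departure, so an index `k + 1` is needed.
  obtain ⟨m, hm, ham⟩ := (hreg v y hvy).exists_gt a
  obtain ⟨k, rfl⟩ : ∃ k, m = k + 1 := ⟨m - 1, by omega⟩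
  set T := Nat.nth (Fires n o (walk n x0 ξ0 o) v) k with hT
  have hkT : k ≤ T := (Nat.nth_strictMono hinf).le_apply
  obtain ⟨i, hi, hpos⟩ : Fires n o (walk n x0 ξ0 o) v T := Nat.nth_mem_of_infinite hinf k
  refine ⟨T + 1, ⟨i, ?_⟩, by omega⟩
  rw [walk_succ_some x0 ξ0 o hi]
  simp only [step, pop, Function.update_self, if_true]
  rw [hpos, walk_stack, hT, Nat.count_nth_of_infinite hinf, zero_add, add_comm]
  exact hm

end

end StackWalk

/-- **Lemma (dichotomy between recurrence and transience).**
On a simple, connected, locally finite graph `G`, a multi-walker stack walk with a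
regular turn order and a regular initial stack is either recurrent or transient. -/
theorem stack_walk_recurrent_or_transient
    {V : Type*} (G : SimpleGraph V) (hG : G.Connected) (hGlf : G.LocallyFinite)
    (n : ℕ) (hn : 0 < n) (x0 : Fin n → V) (ξ0 : V → ℕ → V)
    (hξ0 : StackWalk.IsStack G ξ0) (hreg : StackWalk.RegularStack G ξ0)
    (o : ℕ → Option (Fin n)) (ho : StackWalk.RegularOrder n o) :
    StackWalk.Recurrent n (StackWalk.walk n x0 ξ0 o) ∨
      StackWalk.Transient n (StackWalk.walk n x0 ξ0 o) := by
  by_contra! h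
  obtain ⟨hr, ht⟩ := h
  simp only [StackWalk.Transient, not_forall] at ht
  obtain ⟨v, hv⟩ := ht
  refine hr fun u => ?_
  obtain ⟨p⟩ := hG.preconnected v u
  induction p with
  | nil => exact hv
  | cons hadj _ ih => exact ih (StackWalk.visited_of_adj x0 ξ0 o hreg ho hadj hv)
end
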